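/- arXiv:1601.02566 — 4 statements merged into one kernel-verified Lean document; each statement's English description precedes it below -/
import Mathlib

section
/- Let x, y, σ ∈ ℂ with Re x > 0, Re y > 0, and |Re σ| < 3/4. Then √x · √y · U(3/2, 3, x+y) = (2^{1/2} e^{(x+y)/2} / (π^{3/2} i)) ∫_{σ−i∞}^{σ+i∞} Γ(3/4 − s) Γ(3/4 + s) D_{2s−1/2}(√(2x)) D_{−2s−1/2}(√(2y)) ds, where √x, √y, √(2x), √(2y) are principal square roots. (Note that for s on the contour, Re(2s − 1/2) < 1 and Re(−2s − 1/2) < 1, and Re((√(2x))²/2) = Re x > 0, so the parabolic cylinder functions are in the domain of the stated representation.) -/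
/-- Confluent hypergeometric function of the second kind via its Laplace-transform
representation, valid for `Re a > 0`, `Re z > 0` (principal branch powers). -/
noncomputable def hypU (a b z : ℂ) : ℂ :=
  (Complex.Gamma a)⁻¹ *
    ∫ t in Set.Ioi (0 : ℝ), Complex.exp (-z * t) * (t : ℂ) ^ (a - 1) * ((1 : ℂ) + t) ^ (b - a - 1)

/-- Parabolic cylinder function `D_ν(z) = 2^{(ν-1)/2} e^{-z²/4} z U((1-ν)/2, 3/2, z²/2)`,
valid for `Re ν < 1`, `Re(z²) > 0` (principal branch powers). -/
noncomputable def parD (ν z : ℂ) : ℂ :=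
  (2 : ℂ) ^ ((ν - 1) / 2) * Complex.exp (-z ^ 2 / 4) * z * hypU ((1 - ν) / 2) (3 / 2) (z ^ 2 / 2)

/-- `t(p) = 1/(e^p-1)`. -/
noncomputable def tt (p : ℝ) : ℝ := (Real.exp p - 1)⁻¹

/-- exponential factor -/
noncomputable def EE (z s : ℂ) (p : ℝ) : ℂ :=
  Complex.exp (-z * (tt p : ℂ) + (3 / 2) * (Real.log (tt p) : ℂ) + (3 / 4 + s) * (p : ℂ))

/-- polynomial times exponential factor, extended by zero -/
noncomputable def PP (z s : ℂ) (P : Polynomial ℂ) (p : ℝ) : ℂ :=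
  if 0 < p then P.eval (tt p : ℂ) * EE z s p else 0

/-- derivative operator -/
noncomputable def DD (z s : ℂ) (P : Polynomial ℂ) : Polynomial ℂ :=
  P * (Polynomial.C z * (Polynomial.X * (1 + Polynomial.X))
    - Polynomial.C (3 / 2) * (1 + Polynomial.X) + Polynomial.C (3 / 4 + s))
  - Polynomial.derivative P * (Polynomial.X * (1 + Polynomial.X))

lemma tt_pos {p : ℝ} (hp : 0 < p) : 0 < tt p := by
  unfold tt
  have := Real.add_one_lt_exp hp.ne'
  exact inv_pos.mpr (by linarith)

lemma one_add_tt {p : ℝ} (hp : 0 < p) : 1 + tt p = tt p * Real.exp p := by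
  unfold tt
  have := Real.add_one_lt_exp hp.ne'
  have h : Real.exp p - 1 ≠ 0 := by linarith
  field_simp
  ring

lemma tt_hasDeriv {p : ℝ} (hp : 0 < p) : HasDerivAt tt (-(tt p * (1 + tt p))) p := by
  have := Real.add_one_lt_exp hp.ne'
  have h : Real.exp p - 1 ≠ 0 := by linarith
  have h1 := ((Real.hasDerivAt_exp p).sub_const 1).inv h
  refine HasDerivAt.congr_deriv (f := tt) h1 ?_
  rw [one_add_tt hp]; unfold tt
  field_simp

lemma EE_hasDeriv (z s : ℂ) {p : ℝ} (hp : 0 < p) :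
    HasDerivAt (EE z s) (EE z s p * (z * (tt p * (1 + tt p)) - 3 / 2 * (1 + tt p) + (3 / 4 + s))) p := by
  have h1 := (tt_hasDeriv hp).ofReal_comp
  have h2 := ((tt_hasDeriv hp).log (tt_pos hp).ne').ofReal_comp
  have h3 := (hasDerivAt_id p).ofReal_comp
  have h4 := (((h1.const_mul (-z)).add (h2.const_mul (3/2))).add (h3.const_mul (3/4+s))).cexp
  have hne : (tt p : ℂ) ≠ 0 := by exact_mod_cast (tt_pos hp).ne'
  refine HasDerivAt.congr_deriv (f := EE z s) h4 ?_
  unfold EE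
  simp only [Pi.add_apply, id]
  congr 1
  push_cast
  field_simp
  ring

lemma PP_hasDeriv_pos (z s : ℂ) (P : Polynomial ℂ) {p : ℝ} (hp : 0 < p) :
    HasDerivAt (PP z s P) (PP z s (DD z s P) p) p := by
  have h1 := (P.hasDerivAt (tt p : ℂ)).comp p (tt_hasDeriv hp).ofReal_comp
  have h2 := h1.mul (EE_hasDeriv z s hp)
  have h3 : PP z s P =ᶠ[nhds p] fun p => P.eval (tt p : ℂ) * EE z s p := by
    filter_upwards [lt_mem_nhds hp] with q hq
    simp [PP, hq]
  refine HasDerivAt.congr_of_eventuallyEq ?_ h3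
  refine h2.congr_deriv ?_
  simp only [PP, hp, if_true, DD, Polynomial.eval_sub, Polynomial.eval_mul, Polynomial.eval_add,
    Polynomial.eval_C, Polynomial.eval_X, Polynomial.eval_one, Function.comp]
  push_cast
  ring

lemma PP_hasDeriv_neg (z s : ℂ) (P : Polynomial ℂ) {p : ℝ} (hp : p < 0) :
    HasDerivAt (PP z s P) (PP z s (DD z s P) p) p := by
  have h3 : PP z s P =ᶠ[nhds p] fun p => 0 := by
    filter_upwards [gt_mem_nhds hp] with q hq
    simp [PP, not_lt.mpr hq.le]
  refine HasDerivAt.congr_of_eventuallyEq ?_ h3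
  simpa [PP, not_lt.mpr hp.le] using hasDerivAt_const p (0:ℂ)

lemma norm_EE (z s : ℂ) {p : ℝ} (hp : 0 < p) :
    ‖EE z s p‖ = (tt p) ^ ((3:ℝ)/2) * Real.exp (-z.re * tt p) * Real.exp ((3/4 + s.re) * p) := by
  rw [EE, Complex.norm_exp, Real.rpow_def_of_pos (tt_pos hp), ← Real.exp_add, ← Real.exp_add]
  congr 1
  simp
  ring

lemma tt_tendsto_zero : Filter.Tendsto tt (nhdsWithin 0 (Set.Ioi 0)) Filter.atTop := by
  unfold tt
  apply Filter.Tendsto.inv_tendsto_nhdsGT_zero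
  apply tendsto_nhdsWithin_of_tendsto_nhds_of_eventually_within
  · have : Filter.Tendsto (fun p : ℝ => Real.exp p - 1) (nhds 0) (nhds (Real.exp 0 - 1)) :=
      (Real.continuous_exp.sub continuous_const).tendsto 0
    simp at this
    exact this.mono_left nhdsWithin_le_nhds
  · filter_upwards [self_mem_nhdsWithin] with p hp
    have := Real.add_one_lt_exp (ne_of_gt hp)
    simp at hp ⊢
    linarith

lemma tt_tendsto_top : Filter.Tendsto tt Filter.atTop (nhds 0) := by
  unfold tt
  apply Filter.Tendsto.inv_tendsto_atTop
  exact Filter.tendsto_atTop_add_const_right _ _ Real.tendsto_exp_atTop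

lemma poly_decay (a : ℝ) (ha : 0 < a) (P : Polynomial ℂ) :
    Filter.Tendsto (fun t : ℝ => ‖P.eval (t : ℂ)‖ * (t ^ ((3:ℝ)/2) * Real.exp (-a * t)))
      Filter.atTop (nhds 0) := by
  induction P using Polynomial.induction_on' with
  | add p q hp hq =>
    have hpq := hp.add hq
    rw [add_zero] at hpq
    refine squeeze_zero' ?_ ?_ hpq
    · filter_upwards [Filter.eventually_ge_atTop 0] with t ht
      positivity
    · filter_upwards [Filter.eventually_ge_atTop 0] with t ht
      rw [← add_mul, Polynomial.eval_add]
      gcongr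
      exact norm_add_le _ _
  | monomial n c =>
    have h := (tendsto_rpow_mul_exp_neg_mul_atTop_nhds_zero (n + 3/2) a ha).const_mul ‖c‖
    rw [mul_zero] at h
    refine h.congr' ?_
    filter_upwards [Filter.eventually_gt_atTop 0] with t ht
    rw [Polynomial.eval_monomial, Real.rpow_add ht, Real.rpow_natCast]
    simp [abs_of_pos ht]
    ring

lemma PP_cont_zero (z s : ℂ) (hz : 0 < z.re) (P : Polynomial ℂ) : ContinuousAt (PP z s P) 0 := by
  have h0 : PP z s P 0 = 0 := by simp [PP]
  rw [continuousAt_iff_continuous_left'_right']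
  constructor
  · refine ContinuousWithinAt.congr (f := fun _ => 0) continuousWithinAt_const ?_ h0
    intro y hy
    simp [PP, not_lt.mpr (Set.mem_Iio.mp hy).le]
  · rw [ContinuousWithinAt, h0]
    rw [tendsto_zero_iff_norm_tendsto_zero]
    have h1 := (poly_decay z.re hz P).comp tt_tendsto_zero
    have h2 : Filter.Tendsto (fun p : ℝ => Real.exp ((3/4 + s.re) * p)) (nhdsWithin 0 (Set.Ioi 0))
        (nhds (Real.exp ((3/4 + s.re) * 0))) :=
      Filter.Tendsto.mono_left (Continuous.tendsto (by fun_prop) 0) nhdsWithin_le_nhds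
    have h3 := h1.mul h2
    rw [zero_mul] at h3
    refine h3.congr' ?_
    filter_upwards [self_mem_nhdsWithin] with p hp
    simp only [PP, if_pos (Set.mem_Ioi.mp hp), norm_mul, norm_EE z s hp, Function.comp]
    ring

lemma PP_hasDeriv (z s : ℂ) (hz : 0 < z.re) (P : Polynomial ℂ) (p : ℝ) :
    HasDerivAt (PP z s P) (PP z s (DD z s P) p) p := by
  refine hasDerivAt_of_hasDerivAt_of_ne' (x := 0) ?_ (PP_cont_zero z s hz _)
    (PP_cont_zero z s hz _) p
  intro y hy
  rcases lt_or_gt_of_ne hy with h | h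
  · exact PP_hasDeriv_neg z s P h
  · exact PP_hasDeriv_pos z s P h

lemma PP_continuous (z s : ℂ) (hz : 0 < z.re) (P : Polynomial ℂ) : Continuous (PP z s P) :=
  continuous_iff_continuousAt.mpr fun p => (PP_hasDeriv z s hz P p).continuousAt

lemma PP_integrable (z s : ℂ) (hz : 0 < z.re) (hs : s.re < 3 / 4) (P : Polynomial ℂ) :
    MeasureTheory.Integrable (PP z s P) := by
  have hI : MeasureTheory.IntegrableOn (PP z s P) (Set.Ioi 0) := by
    have hc := PP_continuous z s hz P
    refine (MeasureTheory.integrable_norm_iff hc.aestronglyMeasurable).mp ?_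
    refine integrable_of_isBigO_exp_neg (b := 3/4 - s.re) (by linarith)
      hc.norm.continuousOn ?_
    have hb : (fun p : ℝ => P.eval (tt p : ℂ)) =O[Filter.atTop] fun _ => (1:ℝ) := by
      have : Filter.Tendsto (fun p : ℝ => P.eval (tt p : ℂ)) Filter.atTop
          (nhds (P.eval ((0:ℝ):ℂ))) :=
        ((P.continuous.comp Complex.continuous_ofReal).tendsto 0).comp tt_tendsto_top
      exact this.isBigO_one ℝ
    have hE : EE z s =O[Filter.atTop] fun p => Real.exp (-(3/4 - s.re) * p) := by
      refine Asymptotics.IsBigO.of_bound ((2:ℝ)^((3:ℝ)/2)) ?_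
      filter_upwards [Filter.eventually_ge_atTop 1] with p hp
      have hp0 : 0 < p := by linarith
      rw [norm_EE z s hp0, Real.norm_of_nonneg (Real.exp_pos _).le]
      have h2 : 2 ≤ Real.exp p := by have := Real.add_one_le_exp p; linarith
      have h3 : tt p ≤ 2 * Real.exp (-p) := by
        rw [tt, Real.exp_neg, ← div_eq_mul_inv, inv_eq_one_div, div_le_div_iff₀ (by linarith) (by positivity)]
        linarith
      have h4 : Real.exp (-z.re * tt p) ≤ 1 := by
        apply Real.exp_le_one_iff.mpr
        have := mul_pos hz (tt_pos hp0)
        linarith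
      have h5 : tt p ^ ((3:ℝ)/2) ≤ 2 ^ ((3:ℝ)/2) * Real.exp (-(3/2) * p) := by
        calc tt p ^ ((3:ℝ)/2) ≤ (2 * Real.exp (-p)) ^ ((3:ℝ)/2) :=
              Real.rpow_le_rpow (tt_pos hp0).le h3 (by norm_num)
          _ = _ := by
              rw [Real.mul_rpow (by norm_num) (Real.exp_pos _).le, ← Real.exp_mul]
              congr 2; ring
      calc _ ≤ (2 ^ ((3:ℝ)/2) * Real.exp (-(3/2) * p)) * 1 * Real.exp ((3/4 + s.re) * p) := by
            gcongr
        _ = _ := by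
            rw [mul_one, mul_assoc, ← Real.exp_add]; congr 2; ring
    refine Asymptotics.IsBigO.norm_left ((hb.mul hE).congr' ?_ (by simp))
    filter_upwards [Filter.eventually_gt_atTop 0] with p hp
    simp [PP, hp]
  have h2 : PP z s P = (Set.Ioi (0:ℝ)).indicator (PP z s P) := by
    ext p
    by_cases hp : 0 < p <;> simp [PP, hp]
  rw [h2]
  exact hI.integrable_indicator measurableSet_Ioi

open scoped FourierTransform in
lemma fourier_PP_integrable (z s : ℂ) (hz : 0 < z.re) (hs : s.re < 3 / 4) (P : Polynomial ℂ) :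
    MeasureTheory.Integrable (𝓕 (PP z s P)) := by
  have hI := PP_integrable z s hz hs
  have hd : ∀ Q, deriv (PP z s Q) = PP z s (DD z s Q) := fun Q =>
    funext fun p => (PP_hasDeriv z s hz Q p).deriv
  have hdiff : ∀ Q, Differentiable ℝ (PP z s Q) := fun Q p =>
    (PP_hasDeriv z s hz Q p).differentiableAt
  have hf : ∀ Q (ξ : ℝ), 𝓕 (PP z s (DD z s Q)) ξ = (2 * Real.pi * Complex.I * ξ) * 𝓕 (PP z s Q) ξ := by
    intro Q ξ
    have := Real.fourier_deriv (hI Q) (hdiff Q) (by rw [hd]; exact hI _)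
    rw [hd] at this
    simpa using congrFun this ξ
  have hb : ∀ Q (ξ : ℝ), ‖𝓕 (PP z s Q) ξ‖ ≤ ∫ v, ‖PP z s Q v‖ := fun Q ξ =>
    VectorFourier.norm_fourierIntegral_le_integral_norm _ _ _ _ _
  have hcont : Continuous (𝓕 (PP z s P)) :=
    VectorFourier.fourierIntegral_continuous Real.continuous_fourierChar
      (by exact continuous_inner) (hI P)
  set C0 := ∫ v, ‖PP z s P v‖
  set C2 := ∫ v, ‖PP z s (DD z s (DD z s P)) v‖
  have hC2 : 0 ≤ C2 := MeasureTheory.integral_nonneg fun _ => norm_nonneg _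
  refine (integrable_inv_one_add_sq.const_mul (C0 + C2)).mono' hcont.aestronglyMeasurable ?_
  refine Filter.Eventually.of_forall fun ξ => ?_
  have h2 := hb (DD z s (DD z s P)) ξ
  rw [hf, hf] at h2
  have h0 := hb P ξ
  rw [← div_eq_mul_inv, le_div_iff₀ (by positivity)]
  have h3 : ‖(2 * Real.pi * Complex.I * ξ) * ((2 * Real.pi * Complex.I * ξ) * 𝓕 (PP z s P) ξ)‖
      = (4 * Real.pi ^ 2) * (ξ ^ 2 * ‖𝓕 (PP z s P) ξ‖) := by
    simp only [norm_mul, Complex.norm_I, Complex.norm_real, Real.norm_eq_abs, abs_of_pos Real.pi_pos,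
      Complex.norm_ofNat]
    rw [← sq_abs ξ]
    ring
  rw [h3] at h2
  have h4 : 1 ≤ 4 * Real.pi ^ 2 := by nlinarith [Real.pi_gt_three]
  have h5 : 0 ≤ ξ ^ 2 * ‖𝓕 (PP z s P) ξ‖ := by positivity
  have h6 := le_mul_of_one_le_left h5 h4
  change ‖𝓕 (PP z s P) ξ‖ ≤ C0 at h0
  change _ ≤ C2 at h2
  linarith

open scoped FourierTransform in
lemma parseval (f g : ℝ → ℂ) (hf : MeasureTheory.Integrable f) (hfc : Continuous f)
    (hff : MeasureTheory.Integrable (𝓕 f)) (hg : MeasureTheory.Integrable g) :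
    ∫ ξ : ℝ, 𝓕 f (-ξ) * 𝓕 g ξ = ∫ p, f p * g p := by
  have h1 := VectorFourier.integral_fourierIntegral_smul_eq_flip (μ := MeasureTheory.volume)
    (ν := MeasureTheory.volume) (L := innerₗ ℝ) (f := g) (g := fun ξ => 𝓕 f (-ξ))
    Real.continuous_fourierChar (by exact continuous_inner) hg hff.comp_neg
  have h2 : ∀ p, 𝓕 (fun ξ => 𝓕 f (-ξ)) p = f p := by
    intro p
    have := congrFun (hfc.fourierInv_fourier_eq hf hff) p
    rw [Real.fourierInv_eq_fourier_comp_neg] at this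
    exact this
  rw [flip_innerₗ] at h1
  calc ∫ ξ : ℝ, 𝓕 f (-ξ) * 𝓕 g ξ = ∫ ξ : ℝ, 𝓕 g ξ • 𝓕 f (-ξ) := by
        congr 1; ext ξ; rw [smul_eq_mul, mul_comm]
    _ = ∫ p : ℝ, g p • 𝓕 (fun ξ => 𝓕 f (-ξ)) p := h1
    _ = _ := by
        congr 1; ext p; rw [h2, smul_eq_mul, mul_comm]

lemma tt_image : tt '' Set.Ioi 0 = Set.Ioi 0 := by
  ext t
  constructor
  · rintro ⟨p, hp, rfl⟩
    exact tt_pos hp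
  · intro ht
    have ht : 0 < t := ht
    refine ⟨Real.log (1 + t⁻¹), Real.log_pos (by simpa using ht), ?_⟩
    rw [tt, Real.exp_log (by positivity)]
    simp

lemma tt_inj : Set.InjOn tt (Set.Ioi 0) := by
  intro p hp q hq h
  unfold tt at h
  have := inv_injective h
  exact Real.exp_injective (by linarith)

lemma cov (z α β : ℂ) :
    ∫ t in Set.Ioi (0 : ℝ), Complex.exp (-z * t) * (t : ℂ) ^ α * ((1 : ℂ) + t) ^ β =
    ∫ p in Set.Ioi (0 : ℝ), Complex.exp (-z * (tt p : ℂ) + (α + β + 2) * (Real.log (tt p) : ℂ)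
      + (β + 1) * (p : ℂ)) := by
  have h := MeasureTheory.integral_image_eq_integral_abs_deriv_smul (s := Set.Ioi (0:ℝ)) (f := tt)
    measurableSet_Ioi (fun p hp => (tt_hasDeriv hp).hasDerivWithinAt) tt_inj
    (fun t : ℝ => Complex.exp (-z * t) * (t : ℂ) ^ α * ((1 : ℂ) + t) ^ β)
  rw [tt_image] at h
  rw [h]
  refine MeasureTheory.setIntegral_congr_fun measurableSet_Ioi ?_
  intro p hp
  have hp : 0 < p := hp
  have ht := tt_pos hp
  have hw : 0 < tt p * (1 + tt p) := by positivity
  have htc : (tt p : ℂ) ≠ 0 := by exact_mod_cast ht.ne'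
  have h1c : (1 : ℂ) + tt p ≠ 0 := by exact_mod_cast (by positivity : 1 + tt p ≠ 0)
  have hl : Complex.log (1 + tt p) = Real.log (tt p) + p := by
    rw [show (1 : ℂ) + tt p = ((1 + tt p : ℝ) : ℂ) by push_cast; rfl, ← Complex.ofReal_log (by positivity),
      one_add_tt hp, Real.log_mul ht.ne' (Real.exp_pos _).ne', Real.log_exp]
    push_cast; rfl
  have h3 : (tt p : ℂ) * (1 + tt p) = Complex.exp (2 * Real.log (tt p) + p) := by
    rw [← Complex.exp_log h1c, hl, ← Complex.exp_log htc, ← Complex.exp_add, ← Complex.ofReal_log ht.le]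
    congr 1; ring
  simp only [abs_neg, abs_of_pos hw, Complex.real_smul]
  rw [Complex.cpow_def_of_ne_zero htc, Complex.cpow_def_of_ne_zero h1c, hl, ← Complex.ofReal_log ht.le]
  push_cast
  rw [h3, ← Complex.exp_add, ← Complex.exp_add, ← Complex.exp_add]
  congr 1
  ring

lemma gamma_hypU (z s : ℂ) (hs : s.re < 3 / 4) :
    Complex.Gamma (3 / 4 - s) * hypU (3 / 4 - s) (3 / 2) z = ∫ p in Set.Ioi (0 : ℝ), EE z s p := by
  have hG : Complex.Gamma (3 / 4 - s) ≠ 0 := by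
    apply Complex.Gamma_ne_zero_of_re_pos
    norm_num
    linarith
  rw [hypU, mul_inv_cancel_left₀ hG, cov]
  unfold EE
  congr 1
  ext p
  congr 1
  ring

open scoped FourierTransform in
lemma EE_fourier (z σ : ℂ) (τ : ℝ) :
    ∫ p in Set.Ioi (0 : ℝ), EE z (σ + Complex.I * τ) p = 𝓕 (PP z σ 1) (-(τ / (2 * Real.pi))) := by
  rw [Real.fourier_real_eq_integral_exp_smul, ← MeasureTheory.integral_indicator measurableSet_Ioi]
  congr 1
  ext p
  by_cases hp : 0 < p
  · simp only [PP, hp, Set.indicator, Set.mem_Ioi, if_true, Polynomial.eval_one, one_mul, smul_eq_mul]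
    rw [EE, EE, ← Complex.exp_add]
    congr 1
    have : (Real.pi : ℂ) ≠ 0 := by exact_mod_cast Real.pi_ne_zero
    push_cast
    field_simp
    ring
  · simp [PP, hp]

lemma PP_mul_integral (x y σ : ℂ) :
    ∫ p, PP x σ 1 p * PP y (-σ) 1 p = Complex.Gamma (3 / 2) * hypU (3 / 2) 3 (x + y) := by
  have hG : Complex.Gamma (3 / 2) ≠ 0 := by
    apply Complex.Gamma_ne_zero_of_re_pos
    norm_num
  rw [hypU, mul_inv_cancel_left₀ hG, cov, ← MeasureTheory.integral_indicator measurableSet_Ioi]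
  congr 1
  ext p
  by_cases hp : 0 < p
  · simp only [PP, hp, Set.indicator, Set.mem_Ioi, if_true, Polynomial.eval_one, one_mul]
    rw [EE, EE, ← Complex.exp_add]
    congr 1
    ring
  · simp [PP, hp]

open scoped FourierTransform in
lemma key (x y σ : ℂ) (hx : 0 < x.re) (hy : 0 < y.re) (hσ : |σ.re| < 3 / 4) :
    ∫ τ : ℝ, (Complex.Gamma (3 / 4 - (σ + Complex.I * τ)) * hypU (3 / 4 - (σ + Complex.I * τ)) (3 / 2) x) *
      (Complex.Gamma (3 / 4 + (σ + Complex.I * τ)) * hypU (3 / 4 + (σ + Complex.I * τ)) (3 / 2) y)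
    = 2 * Real.pi * (Complex.Gamma (3 / 2) * hypU (3 / 2) 3 (x + y)) := by
  obtain ⟨h1, h2⟩ := abs_lt.mp hσ
  have hm : (-σ).re < 3 / 4 := by simp; linarith
  have hpt : ∀ τ : ℝ, (Complex.Gamma (3 / 4 - (σ + Complex.I * τ)) * hypU (3 / 4 - (σ + Complex.I * τ)) (3 / 2) x) *
      (Complex.Gamma (3 / 4 + (σ + Complex.I * τ)) * hypU (3 / 4 + (σ + Complex.I * τ)) (3 / 2) y)
      = (fun ξ : ℝ => 𝓕 (PP x σ 1) (-ξ) * 𝓕 (PP y (-σ) 1) ξ) (τ / (2 * Real.pi)) := by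
    intro τ
    have e : (3 / 4 + (σ + Complex.I * τ)) = 3 / 4 - (-σ + Complex.I * ((-τ : ℝ) : ℂ)) := by
      push_cast; ring
    rw [e, gamma_hypU x _ (by simpa using h2), gamma_hypU y _ (by simpa using hm), EE_fourier, EE_fourier]
    simp only [neg_div, neg_neg]
  rw [MeasureTheory.integral_congr_ae (Filter.Eventually.of_forall hpt)]
  refine (MeasureTheory.Measure.integral_comp_div
    (fun ξ : ℝ => 𝓕 (PP x σ 1) (-ξ) * 𝓕 (PP y (-σ) 1) ξ) (2 * Real.pi)).trans ?_
  rw [ parseval _ _ (PP_integrable x σ hx h2 1)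
    (PP_continuous x σ hx 1) (fourier_PP_integrable x σ hx h2 1) (PP_integrable y (-σ) hy hm 1),
    PP_mul_integral, abs_of_pos (by positivity), Complex.real_smul]
  push_cast
  rfl

lemma sqrt_two_mul (x : ℂ) (hx : 0 < x.re) :
    (2 * x) ^ ((1 : ℂ) / 2) = (2 : ℂ) ^ ((1 : ℂ) / 2) * x ^ ((1 : ℂ) / 2) := by
  have hx0 : x ≠ 0 := by rintro rfl; simp at hx
  have := Complex.log_ofReal_mul (r := 2) (by norm_num) hx0
  rw [Complex.cpow_def_of_ne_zero (by simpa using hx0), Complex.cpow_def_of_ne_zero (by norm_num),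
    Complex.cpow_def_of_ne_zero hx0, ← Complex.exp_add]
  congr 1
  push_cast at this
  rw [this, Complex.ofReal_log (by norm_num)]
  push_cast
  ring

lemma half_sq (x : ℂ) : (x ^ ((1 : ℂ) / 2)) ^ 2 = x := by
  rw [one_div]
  exact Complex.cpow_nat_inv_pow x two_ne_zero

lemma parD_eq (a x : ℂ) (hx : 0 < x.re) :
    parD (1 - 2 * a) ((2 * x) ^ ((1 : ℂ) / 2)) =
      (2 : ℂ) ^ (-a) * Complex.exp (-x / 2) * ((2 : ℂ) ^ ((1 : ℂ) / 2) * x ^ ((1 : ℂ) / 2)) *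
        hypU a (3 / 2) x := by
  rw [parD, half_sq, sqrt_two_mul x hx]
  rw [show (1 - 2 * a - 1) / 2 = -a by ring, show -(2 * x) / 4 = -x / 2 by ring,
    show (1 - (1 - 2 * a)) / 2 = a by ring, show 2 * x / 2 = x by ring]

/-- Integral addition theorem (case `c = 3/2`):
`√x √y U(3/2,3,x+y) = (2^{1/2} e^{(x+y)/2}/(π^{3/2} i)) ∫_{σ-i∞}^{σ+i∞} Γ(3/4-s) Γ(3/4+s)
D_{2s-1/2}(√(2x)) D_{-2s-1/2}(√(2y)) ds`, the contour integral being `i ∫_ℝ f(σ+iτ) dτ`. -/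
theorem addition_c_three_halves (x y σ : ℂ) (hx : 0 < x.re) (hy : 0 < y.re)
    (hσ : |σ.re| < 3 / 4) :
    x ^ ((1 : ℂ) / 2) * y ^ ((1 : ℂ) / 2) * hypU (3 / 2) 3 (x + y) =
      ((2 : ℂ) ^ ((1 : ℂ) / 2) * Complex.exp ((x + y) / 2) /
          ((Real.pi : ℂ) ^ ((3 : ℂ) / 2) * Complex.I)) *
        (Complex.I * ∫ τ : ℝ,
          Complex.Gamma (3 / 4 - (σ + Complex.I * τ)) *
          Complex.Gamma (3 / 4 + (σ + Complex.I * τ)) *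
          parD (2 * (σ + Complex.I * τ) - 1 / 2) ((2 * x) ^ ((1 : ℂ) / 2)) *
          parD (-2 * (σ + Complex.I * τ) - 1 / 2) ((2 * y) ^ ((1 : ℂ) / 2))) := by
  have hpt : ∀ τ : ℝ, Complex.Gamma (3 / 4 - (σ + Complex.I * τ)) *
          Complex.Gamma (3 / 4 + (σ + Complex.I * τ)) *
          parD (2 * (σ + Complex.I * τ) - 1 / 2) ((2 * x) ^ ((1 : ℂ) / 2)) *
          parD (-2 * (σ + Complex.I * τ) - 1 / 2) ((2 * y) ^ ((1 : ℂ) / 2)) =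
      ((2 : ℂ) ^ (-(3 / 2) : ℂ) * Complex.exp (-(x + y) / 2) *
        (2 * (x ^ ((1 : ℂ) / 2) * y ^ ((1 : ℂ) / 2)))) *
      ((Complex.Gamma (3 / 4 - (σ + Complex.I * τ)) * hypU (3 / 4 - (σ + Complex.I * τ)) (3 / 2) x) *
      (Complex.Gamma (3 / 4 + (σ + Complex.I * τ)) * hypU (3 / 4 + (σ + Complex.I * τ)) (3 / 2) y)) := by
    intro τ
    rw [show 2 * (σ + Complex.I * τ) - 1 / 2 = 1 - 2 * (3 / 4 - (σ + Complex.I * τ)) by ring,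
      show -2 * (σ + Complex.I * τ) - 1 / 2 = 1 - 2 * (3 / 4 + (σ + Complex.I * τ)) by ring,
      parD_eq _ x hx, parD_eq _ y hy]
    have e1 : (2 : ℂ) ^ (-(3 / 2) : ℂ) = (2 : ℂ) ^ (-(3 / 4 - (σ + Complex.I * τ))) *
        (2 : ℂ) ^ (-(3 / 4 + (σ + Complex.I * τ))) := by
      rw [← Complex.cpow_add _ _ two_ne_zero]; congr 1; ring
    have e2 : Complex.exp (-(x + y) / 2) = Complex.exp (-x / 2) * Complex.exp (-y / 2) := by
      rw [← Complex.exp_add]; congr 1; ring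
    have e3 := half_sq 2
    rw [e1, e2]
    conv_rhs => rw [← e3]
    simp only [e3]
    linear_combination (Complex.Gamma (3 / 4 - (σ + Complex.I * τ)) *
      Complex.Gamma (3 / 4 + (σ + Complex.I * τ)) * ((2 : ℂ) ^ (-(3 / 4 - (σ + Complex.I * τ))) *
        (2 : ℂ) ^ (-(3 / 4 + (σ + Complex.I * τ)))) * (Complex.exp (-x / 2) * Complex.exp (-y / 2)) *
        (x ^ ((1 : ℂ) / 2) * y ^ ((1 : ℂ) / 2)) * hypU (3 / 4 - (σ + Complex.I * τ)) (3 / 2) x *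
        hypU (3 / 4 + (σ + Complex.I * τ)) (3 / 2) y) * e3
  simp_rw [hpt]
  rw [MeasureTheory.integral_const_mul, key x y σ hx hy hσ]
  have hpi : (Real.pi : ℂ) ≠ 0 := by exact_mod_cast Real.pi_ne_zero
  have hG : Complex.Gamma (3 / 2) = (Real.pi : ℂ) ^ ((1 : ℂ) / 2) / 2 := by
    have := Complex.Gamma_add_one (1 / 2) (by norm_num)
    rw [Complex.Gamma_one_half_eq] at this
    rw [show (3 / 2 : ℂ) = 1 / 2 + 1 by norm_num, this]
    ring
  have hp : (Real.pi : ℂ) ^ ((3 : ℂ) / 2) = Real.pi * (Real.pi : ℂ) ^ ((1 : ℂ) / 2) := by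
    rw [show (3 / 2 : ℂ) = 1 + 1 / 2 by norm_num, Complex.cpow_add _ _ hpi, Complex.cpow_one]
  have hp0 : (Real.pi : ℂ) ^ ((1 : ℂ) / 2) ≠ 0 := by
    rw [Complex.cpow_def_of_ne_zero hpi]; exact Complex.exp_ne_zero _
  have e2 : (2 : ℂ) ^ (-(3 / 2) : ℂ) * (2 : ℂ) ^ ((1 : ℂ) / 2) = 1 / 2 := by
    rw [← Complex.cpow_add _ _ two_ne_zero, show (-(3 / 2) + 1 / 2 : ℂ) = -1 by norm_num,
      Complex.cpow_neg_one]
    norm_num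
  have e3 : Complex.exp ((x + y) / 2) * Complex.exp (-(x + y) / 2) = 1 := by
    rw [← Complex.exp_add, ← Complex.exp_zero]; congr 1; ring
  rw [hG, hp]
  generalize Complex.exp ((x + y) / 2) = A at *
  generalize Complex.exp (-(x + y) / 2) = B at *
  generalize (2 : ℂ) ^ (-(3 / 2) : ℂ) = c at *
  generalize (2 : ℂ) ^ ((1 : ℂ) / 2) = d at *
  generalize (Real.pi : ℂ) ^ ((1 : ℂ) / 2) = r at *
  generalize x ^ ((1 : ℂ) / 2) = X at *
  generalize y ^ ((1 : ℂ) / 2) = Y at *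
  generalize hypU (3 / 2) 3 (x + y) = U at *
  have hI := Complex.I_ne_zero
  field_simp
  linear_combination (-2 * X * Y * U * (A * B)) * e2 - X * Y * U * e3
end

section
/- Let ξ, η, σ ∈ ℂ with Im(ξ²) > 0, Im(η²) > 0, and |Re σ| < 3/4. Then ξη · H₁⁽¹⁾((ξ² + η²)/2) = −(2^{3/2}(ξ² + η²)/(π² i)) ∫_{σ−i∞}^{σ+i∞} Γ(3/4 − s) Γ(3/4 + s) D_{2s−1/2}((1−i)ξ) D_{−2s−1/2}((1−i)η) ds. (Note that ((1−i)ξ)²/2 = −iξ² has positive real part and Im((ξ²+η²)/2) > 0, so all functions appearing are in the domains of the stated representations.) -/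
/-- Order-one Hankel function of the first kind,
`H₁⁽¹⁾(ζ) = (-2i/√π) e^{i(ζ-π)} (2ζ) U(3/2, 3, -2iζ)`, valid for `Im ζ > 0`. -/
noncomputable def hankelH11 (ζ : ℂ) : ℂ :=
  -2 * Complex.I / (Real.sqrt Real.pi : ℂ) * Complex.exp (Complex.I * (ζ - Real.pi)) *
    (2 * ζ) * hypU (3 / 2) 3 (-2 * Complex.I * ζ)

open MeasureTheory Set Filter
open scoped FourierTransform SchwartzMap ContDiff

theorem fourier_toLp_ae (f : ℝ → ℂ) (hf : Integrable f) (hf2 : MemLp f 2) :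
    (𝓕 (hf2.toLp f) : Lp (α := ℝ) ℂ 2) =ᵐ[volume] 𝓕 f := by
  apply ae_eq_of_integral_contDiff_smul_eq
  · exact (Lp.memLp _).locallyIntegrable (by norm_num)
  · refine Continuous.locallyIntegrable ?_
    exact VectorFourier.fourierIntegral_continuous Real.continuous_fourierChar
      (by exact continuous_inner) hf
  intro g hg1 hg2
  have hg2' : HasCompactSupport (Complex.ofRealCLM ∘ g) := hg2.comp_left rfl
  let φ : 𝓢(ℝ, ℂ) := hg2'.toSchwartzMap (Complex.ofRealCLM.contDiff.comp hg1)
  have hφ : ∀ x, φ x = (g x : ℂ) := fun x => rfl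
  have key := congrArg (fun T => T φ) (Lp.fourier_toTemperedDistribution_eq (hf2.toLp f))
  simp only [TemperedDistribution.fourier_apply, Lp.toTemperedDistribution_apply, hφ] at key
  have hφi : Integrable (φ : ℝ → ℂ) volume := SchwartzMap.integrable φ
  have h3 : ∫ x, (𝓕 (φ : ℝ → ℂ)) x • f x = ∫ x, φ x • 𝓕 f x := by
    simpa using! (VectorFourier.integral_fourierIntegral_smul_eq_flip (L := innerₗ ℝ)
      Real.continuous_fourierChar continuous_inner hφi hf)
  calc _ = ∫ x, (g x : ℂ) • (𝓕 (hf2.toLp f) : Lp ℂ 2 (volume : Measure ℝ)) x := by simp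
    _ = _ := key.symm
    _ = ∫ x, (𝓕 (φ : ℝ → ℂ)) x • f x := by
      apply integral_congr_ae
      filter_upwards [hf2.coeFn_toLp] with x hx
      rw [hx, SchwartzMap.fourier_coe]
    _ = _ := by rw [h3]; simp [hφ]

theorem plancherel_aux (f g : ℝ → ℂ) (hf : Integrable f) (hf2 : MemLp f 2)
    (hg : Integrable g) (hg2 : MemLp g 2) :
    ∫ v, (starRingEnd ℂ) (𝓕 f v) * 𝓕 g v = ∫ x, (starRingEnd ℂ) (f x) * g x := by
  have h := Lp.inner_fourier_eq (hf2.toLp f) (hg2.toLp g)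
  rw [L2.inner_def, L2.inner_def] at h
  calc _ = _ := ?_
    _ = _ := h
    _ = _ := ?_
  · apply integral_congr_ae
    filter_upwards [fourier_toLp_ae f hf hf2, fourier_toLp_ae g hg hg2] with x h1 h2
    rw [h1, h2]; simp [mul_comm]
  · apply integral_congr_ae
    filter_upwards [hf2.coeFn_toLp, hg2.coeFn_toLp] with x h1 h2
    rw [h1, h2]; simp [mul_comm]

theorem real_integrable_aux (P α β : ℝ) (hP : 0 < P) (hα : -1 < α) :
    IntegrableOn (fun t : ℝ => Real.exp (-P * t) * t ^ α * (1 + t) ^ β) (Ioi 0) := by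
  have h0 : ∀ s : ℝ, -1 < s → IntegrableOn (fun t : ℝ => t ^ s * Real.exp (-P * t)) (Ioi 0) := by
    intro s hs
    simpa using integrableOn_rpow_mul_exp_neg_mul_rpow hs one_pos hP
  set γ := max β 0 with hγ
  have hγ0 : 0 ≤ γ := le_max_right _ _
  have h1 := ((h0 α hα).add (h0 (α + γ) (by linarith))).const_mul (2 ^ γ)
  refine Integrable.mono' h1 ?_ ?_
  · refine ContinuousOn.aestronglyMeasurable ?_ measurableSet_Ioi
    intro t ht
    have ht : 0 < t := ht
    apply ContinuousAt.continuousWithinAt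
    refine ContinuousAt.mul (ContinuousAt.mul (by fun_prop) ?_) ?_
    · exact Real.continuousAt_rpow_const _ _ (Or.inl ht.ne')
    · exact ContinuousAt.rpow_const (by fun_prop) (Or.inl (by linarith))
  · filter_upwards [ae_restrict_mem measurableSet_Ioi] with t ht
    have ht : 0 < t := ht
    rw [Real.norm_of_nonneg (by positivity)]
    have hb : (1 + t) ^ β ≤ 2 ^ γ * (1 + t ^ γ) := by
      calc (1 + t) ^ β ≤ (1 + t) ^ γ := Real.rpow_le_rpow_of_exponent_le (by linarith) (le_max_left _ _)
        _ ≤ (2 * max 1 t) ^ γ := by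
          apply Real.rpow_le_rpow (by linarith) _ hγ0
          linarith [le_max_left 1 t, le_max_right 1 t]
        _ = 2 ^ γ * (max 1 t) ^ γ := Real.mul_rpow (by norm_num) (by positivity)
        _ ≤ _ := by
          gcongr
          rcases le_total 1 t with h | h
          · rw [max_eq_right h]; linarith
          · rw [max_eq_left h, Real.one_rpow]; linarith [Real.rpow_nonneg ht.le γ]
    calc Real.exp (-P * t) * t ^ α * (1 + t) ^ β
        ≤ Real.exp (-P * t) * t ^ α * (2 ^ γ * (1 + t ^ γ)) := by gcongr
      _ = _ := by simp only [Pi.add_apply]; rw [Real.rpow_add ht]; ring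

theorem cpx_integrable_aux (P α β : ℂ) (hP : 0 < P.re) (hα : -1 < α.re) :
    IntegrableOn (fun t : ℝ => Complex.exp (-P * t) * (t : ℂ) ^ α * ((1 : ℂ) + t) ^ β) (Ioi 0) := by
  refine Integrable.mono' (real_integrable_aux P.re α.re β.re hP hα) ?_ ?_
  · refine ContinuousOn.aestronglyMeasurable ?_ measurableSet_Ioi
    intro t ht
    have ht : 0 < t := ht
    apply ContinuousAt.continuousWithinAt
    refine ContinuousAt.mul (ContinuousAt.mul (by fun_prop) ?_) ?_
    · exact ContinuousAt.cpow (by fun_prop) (by fun_prop) (Or.inl ht)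
    · exact ContinuousAt.cpow (by fun_prop) (by fun_prop) (Or.inl (by simp; linarith))
  · filter_upwards [ae_restrict_mem measurableSet_Ioi] with t ht
    have ht : 0 < t := ht
    rw [norm_mul, norm_mul, Complex.norm_exp, Complex.norm_cpow_eq_rpow_re_of_pos ht,
      show (1 : ℂ) + t = ((1 + t : ℝ) : ℂ) by push_cast; rfl,
      Complex.norm_cpow_eq_rpow_re_of_pos (by linarith)]
    simp

/-- The change of variable. -/
noncomputable def phiAux (x : ℝ) : ℝ := (Real.exp x - 1)⁻¹

theorem phiAux_pos {x : ℝ} (hx : 0 < x) : 0 < phiAux x := by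
  have : 1 < Real.exp x := Real.one_lt_exp_iff.2 hx
  exact inv_pos.2 (by linarith)

theorem phiAux_one_add {x : ℝ} (hx : 0 < x) : 1 + phiAux x = Real.exp x * phiAux x := by
  have : 1 < Real.exp x := Real.one_lt_exp_iff.2 hx
  have : Real.exp x - 1 ≠ 0 := by linarith
  unfold phiAux; field_simp; ring

theorem phiAux_image : phiAux '' (Ioi 0) = Ioi 0 := by
  ext t
  constructor
  · rintro ⟨x, hx, rfl⟩; exact phiAux_pos hx
  · intro ht
    have ht : 0 < t := ht
    have h : 0 < t⁻¹ := by positivity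
    refine ⟨Real.log (1 + t⁻¹), Real.log_pos (by linarith), ?_⟩
    unfold phiAux
    rw [Real.exp_log (by linarith)]; simp

theorem phiAux_inj : InjOn phiAux (Ioi 0) := by
  intro x _ y _ h
  have := inv_injective h
  exact Real.exp_injective (by linarith)

theorem phiAux_deriv : ∀ x ∈ Ioi (0 : ℝ),
    HasDerivWithinAt phiAux (-(phiAux x * (1 + phiAux x))) (Ioi 0) x := by
  intro x hx
  have h1 : 1 < Real.exp x := Real.one_lt_exp_iff.2 hx
  have h2 : Real.exp x - 1 ≠ 0 := by linarith
  have := ((Real.hasDerivAt_exp x).sub_const 1).inv h2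
  rw [phiAux_one_add hx]
  refine HasDerivAt.hasDerivWithinAt ?_
  have e : -(phiAux x * (Real.exp x * phiAux x)) = -Real.exp x / (Real.exp x - 1) ^ 2 := by
    unfold phiAux; field_simp
  rw [e]
  exact this

/-- transformed integrand -/
noncomputable def gAux (P α β : ℂ) (x : ℝ) : ℂ :=
  Complex.exp (-P * phiAux x + (α + β + 2) * Real.log (phiAux x) + (β + 1) * x)

theorem gAux_eq (P α β : ℂ) {x : ℝ} (hx : 0 < x) :
    |-(phiAux x * (1 + phiAux x))| • (Complex.exp (-P * phiAux x) * (phiAux x : ℂ) ^ α *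
      ((1 : ℂ) + phiAux x) ^ β) = gAux P α β x := by
  have hp := phiAux_pos hx
  have hp1 : 0 < 1 + phiAux x := by linarith
  have hlog : Real.log (1 + phiAux x) = x + Real.log (phiAux x) := by
    rw [phiAux_one_add hx, Real.log_mul (Real.exp_pos x).ne' hp.ne', Real.log_exp]
  have hab : |-(phiAux x * (1 + phiAux x))| =
      Real.exp (Real.log (phiAux x) + (x + Real.log (phiAux x))) := by
    rw [abs_neg, abs_of_pos (by positivity), ← hlog, Real.exp_add, Real.exp_log hp, Real.exp_log hp1]
  rw [hab, show (1 : ℂ) + phiAux x = ((1 + phiAux x : ℝ) : ℂ) by push_cast; rfl,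
    Complex.cpow_def_of_ne_zero (by exact_mod_cast hp.ne'),
    Complex.cpow_def_of_ne_zero (by exact_mod_cast hp1.ne'),
    ← Complex.ofReal_log hp.le, ← Complex.ofReal_log hp1.le, hlog, Complex.real_smul,
    Complex.ofReal_exp, ← Complex.exp_add, ← Complex.exp_add, ← Complex.exp_add]
  unfold gAux
  congr 1
  push_cast
  ring

theorem gAux_integral (P α β : ℂ) :
    ∫ t in Ioi (0 : ℝ), Complex.exp (-P * t) * (t : ℂ) ^ α * ((1 : ℂ) + t) ^ β =
      ∫ x in Ioi (0 : ℝ), gAux P α β x := by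
  conv_lhs => rw [← phiAux_image]
  rw [integral_image_eq_integral_abs_deriv_smul measurableSet_Ioi phiAux_deriv phiAux_inj]
  exact setIntegral_congr_fun measurableSet_Ioi fun x hx => gAux_eq P α β hx

theorem gAux_integrable (P α β : ℂ) (hP : 0 < P.re) (hα : -1 < α.re) :
    IntegrableOn (gAux P α β) (Ioi 0) := by
  have h := cpx_integrable_aux P α β hP hα
  rw [← phiAux_image, integrableOn_image_iff_integrableOn_abs_deriv_smul measurableSet_Ioi
    phiAux_deriv phiAux_inj] at h
  exact h.congr_fun (fun x hx => gAux_eq P α β hx) measurableSet_Ioi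

/-- the integrand for the Fourier transform -/
noncomputable def fAux (P s : ℂ) : ℝ → ℂ := (Ioi 0).indicator (gAux P (-1/4 - s) (-1/4 + s))

theorem fAux_integrable (P s : ℂ) (hP : 0 < P.re) (hs : s.re < 3 / 4) : Integrable (fAux P s) := by
  refine (integrable_indicator_iff measurableSet_Ioi).2 (gAux_integrable _ _ _ hP ?_)
  simp; norm_num; linarith

theorem fAux_memLp (P s : ℂ) (hP : 0 < P.re) (hs : s.re < 3 / 4) : MemLp (fAux P s) 2 := by
  rw [memLp_two_iff_integrable_sq_norm (fAux_integrable P s hP hs).aestronglyMeasurable]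
  have h := (gAux_integrable (2 * P) (1/2 - 2 * s) (1/2 + 2 * s) (by simpa using hP)
    (by simp; norm_num; linarith)).norm
  replace h := (integrable_indicator_iff measurableSet_Ioi).2 h
  refine h.congr (Eventually.of_forall fun x => ?_)
  by_cases hx : x ∈ Ioi (0 : ℝ)
  · simp only [fAux, indicator_of_mem hx, gAux]
    rw [← norm_pow, ← Complex.exp_nat_mul]
    congr 2
    push_cast; ring
  · simp [fAux, indicator_of_notMem hx]

theorem fAux_conj (P : ℂ) (c x : ℝ) :
    (starRingEnd ℂ) (fAux (starRingEnd ℂ P) c x) = fAux P c x := by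
  by_cases hx : x ∈ Ioi (0 : ℝ)
  · simp only [fAux, indicator_of_mem hx, gAux]
    rw [← Complex.exp_conj]
    simp [Complex.conj_ofNat]
  · simp [fAux, indicator_of_notMem hx]

theorem fourier_fAux (P : ℂ) (c v : ℝ) (s : ℂ) (hs : s = c - 2 * Real.pi * v * Complex.I) :
    𝓕 (fAux P c) v = ∫ x in Ioi (0 : ℝ), gAux P (-1/4 - s) (-1/4 + s) x := by
  rw [Real.fourier_eq', ← integral_indicator measurableSet_Ioi]
  congr 1
  ext x
  by_cases hx : x ∈ Ioi (0 : ℝ)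
  · simp only [fAux, indicator_of_mem hx, gAux]
    rw [smul_eq_mul, ← Complex.exp_add, hs]
    congr 1
    simp
    ring
  · simp [fAux, indicator_of_notMem hx]

theorem conj_fourier_fAux (P : ℂ) (c v : ℝ) (s : ℂ) (hs : s = c + 2 * Real.pi * v * Complex.I) :
    (starRingEnd ℂ) (𝓕 (fAux (starRingEnd ℂ P) c) v) =
      ∫ x in Ioi (0 : ℝ), gAux P (-1/4 - s) (-1/4 + s) x := by
  rw [Real.fourier_eq', ← integral_indicator measurableSet_Ioi, ← integral_conj]
  congr 1
  ext x
  rw [smul_eq_mul, map_mul, fAux_conj]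
  by_cases hx : x ∈ Ioi (0 : ℝ)
  · simp only [fAux, indicator_of_mem hx, gAux]
    rw [← Complex.exp_conj, ← Complex.exp_add, hs]
    congr 1
    simp [Complex.conj_ofNat]
    ring
  · simp [fAux, indicator_of_notMem hx]

/-- Mellin-Barnes building block. -/
noncomputable def JAux (P s : ℂ) : ℂ := ∫ x in Ioi (0 : ℝ), gAux P (-1/4 - s) (-1/4 + s) x

theorem gamma_mul_hypU (a b z : ℂ) (ha : 0 < a.re) :
    Complex.Gamma a * hypU a b z = ∫ x in Ioi (0 : ℝ), gAux z (a - 1) (b - a - 1) x := by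
  rw [← gAux_integral, hypU, mul_inv_cancel_left₀ (Complex.Gamma_ne_zero_of_re_pos ha)]

theorem parD_aux (s z : ℂ) (hs : s.re < 3 / 4) :
    Complex.Gamma (3 / 4 - s) * parD (2 * s - 1 / 2) z =
      (2 : ℂ) ^ (s - 3 / 4) * Complex.exp (-z ^ 2 / 4) * z * JAux (z ^ 2 / 2) s := by
  have h := gamma_mul_hypU (3 / 4 - s) (3 / 2) (z ^ 2 / 2) (by simp; norm_num; linarith)
  rw [show (3 / 4 - s - 1 : ℂ) = -1/4 - s by ring,
    show (3 / 2 - (3 / 4 - s) - 1 : ℂ) = -1/4 + s by ring] at h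
  rw [parD, JAux, ← h, show (1 - (2 * s - 1 / 2)) / 2 = 3 / 4 - s by ring,
    show (2 * s - 1 / 2 - 1) / 2 = s - 3 / 4 by ring]
  ring

theorem J_integral (P Q : ℂ) (hP : 0 < P.re) (hQ : 0 < Q.re) (σ : ℂ) (hσ : |σ.re| < 3 / 4) :
    ∫ τ : ℝ, JAux P (σ + Complex.I * τ) * JAux Q (-(σ + Complex.I * τ)) =
      2 * Real.pi * (Complex.Gamma (3 / 2) * hypU (3 / 2) 3 (P + Q)) := by
  obtain ⟨h1, h2⟩ := abs_lt.1 hσ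
  set c := σ.re with hc
  have hpi := Real.pi_pos
  let P' := (starRingEnd ℂ) P
  have hP' : 0 < P'.re := by simpa [P'] using hP
  have hpl := plancherel_aux (fAux P' c) (fAux Q (-c : ℝ))
    (fAux_integrable _ _ hP' (by simpa using h2)) (fAux_memLp _ _ hP' (by simpa using h2))
    (fAux_integrable _ _ hQ (by simp; linarith)) (fAux_memLp _ _ hQ (by simp; linarith))
  let K : ℝ → ℂ := fun y => JAux P (c + y * Complex.I) * JAux Q (-(c + y * Complex.I))
  have hK1 : ∀ τ : ℝ, JAux P (σ + Complex.I * τ) * JAux Q (-(σ + Complex.I * τ)) =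
      K (σ.im + τ) := by
    intro τ
    have : σ + Complex.I * τ = c + ((σ.im + τ : ℝ) : ℂ) * Complex.I := by
      apply Complex.ext <;> simp [hc]
    simp only [K]
    rw [this]
  have hK2 : ∀ v : ℝ, (starRingEnd ℂ) (𝓕 (fAux P' c) v) * 𝓕 (fAux Q (-c : ℝ)) v =
      K (2 * Real.pi * v) := by
    intro v
    rw [conj_fourier_fAux P c v _ rfl, fourier_fAux Q (-c) v _ rfl]
    simp only [K, JAux]
    push_cast
    congr! 3
    congr 1 <;> ring
  simp_rw [hK1]
  rw [integral_add_left_eq_self K]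
  simp_rw [hK2] at hpl
  rw [Measure.integral_comp_mul_left, abs_of_pos (by positivity)] at hpl
  have hJ : ∫ x, (starRingEnd ℂ) (fAux P' c x) * fAux Q (-c : ℝ) x =
      Complex.Gamma (3 / 2) * hypU (3 / 2) 3 (P + Q) := by
    rw [gamma_mul_hypU _ _ _ (by norm_num), ← integral_indicator measurableSet_Ioi]
    congr 1
    ext x
    rw [fAux_conj]
    by_cases hx : x ∈ Ioi (0 : ℝ)
    · simp only [fAux, indicator_of_mem hx, gAux]
      rw [← Complex.exp_add]
      congr 1
      push_cast
      ring
    · simp [fAux, indicator_of_notMem hx]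
  rw [← hJ, ← hpl, Complex.real_smul]
  push_cast
  field_simp

/-- Addition theorem for the order-one Hankel function of the first kind. -/
theorem hankelH11_addition (ξ η σ : ℂ) (hξ : 0 < (ξ ^ 2).im) (hη : 0 < (η ^ 2).im)
    (hσ : |σ.re| < 3 / 4) :
    ξ * η * hankelH11 ((ξ ^ 2 + η ^ 2) / 2) =
      -((2 : ℂ) ^ ((3 : ℂ) / 2) * (ξ ^ 2 + η ^ 2) / ((Real.pi : ℂ) ^ 2 * Complex.I)) *
        (Complex.I * ∫ τ : ℝ,
          Complex.Gamma (3 / 4 - (σ + Complex.I * τ)) *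
          Complex.Gamma (3 / 4 + (σ + Complex.I * τ)) *
          parD (2 * (σ + Complex.I * τ) - 1 / 2) ((1 - Complex.I) * ξ) *
          parD (-2 * (σ + Complex.I * τ) - 1 / 2) ((1 - Complex.I) * η)) := by
  obtain ⟨h1, h2⟩ := abs_lt.1 hσ
  have hI : (1 - Complex.I) ^ 2 = -2 * Complex.I := by
    linear_combination Complex.I_sq
  have hz : ∀ w : ℂ, ((1 - Complex.I) * w) ^ 2 / 2 = -Complex.I * w ^ 2 := by
    intro w; rw [mul_pow, hI]; ring
  have hz4 : ∀ w : ℂ, -((1 - Complex.I) * w) ^ 2 / 4 = Complex.I * w ^ 2 / 2 := by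
    intro w; rw [mul_pow, hI]; ring
  have hint : ∀ τ : ℝ, Complex.Gamma (3 / 4 - (σ + Complex.I * τ)) *
          Complex.Gamma (3 / 4 + (σ + Complex.I * τ)) *
          parD (2 * (σ + Complex.I * τ) - 1 / 2) ((1 - Complex.I) * ξ) *
          parD (-2 * (σ + Complex.I * τ) - 1 / 2) ((1 - Complex.I) * η) =
      ((2 : ℂ) ^ ((3 : ℂ) / 2))⁻¹ * Complex.exp (Complex.I * ((ξ ^ 2 + η ^ 2) / 2)) *
        (-2 * Complex.I * (ξ * η)) *
      (JAux (-Complex.I * ξ ^ 2) (σ + Complex.I * τ) *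
        JAux (-Complex.I * η ^ 2) (-(σ + Complex.I * τ))) := by
    intro τ
    generalize hs : σ + Complex.I * τ = s
    have hsre : s.re = σ.re := by rw [← hs]; simp
    have e1 := parD_aux s ((1 - Complex.I) * ξ) (by rw [hsre]; exact h2)
    have e2 := parD_aux (-s) ((1 - Complex.I) * η) (by rw [Complex.neg_re, hsre]; linarith)
    rw [hz, hz4] at e1 e2
    rw [show (3 / 4 - -s : ℂ) = 3 / 4 + s by ring, show (2 * -s : ℂ) = -2 * s by ring] at e2
    have hp : (2 : ℂ) ^ (s - 3 / 4) * (2 : ℂ) ^ (-s - 3 / 4) = ((2 : ℂ) ^ ((3 : ℂ) / 2))⁻¹ := by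
      rw [← Complex.cpow_add _ _ two_ne_zero, ← Complex.cpow_neg]
      congr 1; ring
    have he : Complex.exp (Complex.I * ((ξ ^ 2 + η ^ 2) / 2)) =
        Complex.exp (Complex.I * ξ ^ 2 / 2) * Complex.exp (Complex.I * η ^ 2 / 2) := by
      rw [← Complex.exp_add]; congr 1; ring
    rw [he, ← hp, ← hI]
    calc _ = (Complex.Gamma (3 / 4 - s) * parD (2 * s - 1 / 2) ((1 - Complex.I) * ξ)) *
          (Complex.Gamma (3 / 4 + s) * parD (-2 * s - 1 / 2) ((1 - Complex.I) * η)) := by ring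
      _ = _ := by rw [e1, e2]; ring
  simp_rw [hint]
  rw [integral_const_mul, J_integral _ _ (by simpa using hξ) (by simpa using hη) σ hσ]
  have hG : Complex.Gamma (3 / 2) = (Real.sqrt Real.pi : ℂ) / 2 := by
    have h := Complex.Gamma_add_one (1 / 2) (by norm_num)
    rw [show (1 / 2 + 1 : ℂ) = 3 / 2 by norm_num, Complex.Gamma_one_half_eq] at h
    rw [h, Real.sqrt_eq_rpow, Complex.ofReal_cpow Real.pi_pos.le]
    push_cast
    ring
  have hexp : Complex.exp (Complex.I * ((ξ ^ 2 + η ^ 2) / 2 - Real.pi)) =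
      -Complex.exp (Complex.I * ((ξ ^ 2 + η ^ 2) / 2)) := by
    rw [mul_sub, Complex.exp_sub, mul_comm Complex.I (Real.pi : ℂ), Complex.exp_pi_mul_I, div_neg, div_one]
  rw [hankelH11, hG, hexp,
    show -2 * Complex.I * ((ξ ^ 2 + η ^ 2) / 2) = -Complex.I * ξ ^ 2 + -Complex.I * η ^ 2 by ring]
  generalize hypU (3 / 2) 3 (-Complex.I * ξ ^ 2 + -Complex.I * η ^ 2) = U
  generalize Complex.exp (Complex.I * ((ξ ^ 2 + η ^ 2) / 2)) = E
  have h2p : (2 : ℂ) ^ ((3 : ℂ) / 2) ≠ 0 := by simp [Complex.cpow_eq_zero_iff]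
  generalize (2 : ℂ) ^ ((3 : ℂ) / 2) = T at h2p
  have hsq : (Real.pi : ℂ) = (Real.sqrt Real.pi : ℂ) ^ 2 := by
    exact_mod_cast (Real.sq_sqrt Real.pi_pos.le).symm
  have hs0 : (Real.sqrt Real.pi : ℂ) ≠ 0 := by
    exact_mod_cast (Real.sqrt_pos.2 Real.pi_pos).ne'
  rw [hsq]
  generalize (Real.sqrt Real.pi : ℂ) = S at hs0
  have := Complex.I_ne_zero
  field_simp
end

section
/- Let ξ, η, σ ∈ ℂ with Im(ξ²) < 0, Im(η²) < 0, and |Re σ| < 3/4. Then ξη · H₁⁽²⁾((ξ² + η²)/2) = −(2^{3/2}(ξ² + η²)/(π² i)) ∫_{σ−i∞}^{σ+i∞} Γ(3/4 − s) Γ(3/4 + s) D_{2s−1/2}((1+i)ξ) D_{−2s−1/2}((1+i)η) ds. (Note that ((1+i)ξ)²/2 = iξ² has positive real part and Im((ξ²+η²)/2) < 0, so all functions appearing are in the domains of the stated representations.) -/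
/-- Order-one Hankel function of the second kind,
`H₁⁽²⁾(ζ) = (2i/√π) e^{-i(ζ-π)} (2ζ) U(3/2, 3, 2iζ)`, valid for `Im ζ < 0`. -/
noncomputable def hankelH12 (ζ : ℂ) : ℂ :=
  2 * Complex.I / (Real.sqrt Real.pi : ℂ) * Complex.exp (-Complex.I * (ζ - Real.pi)) *
    (2 * ζ) * hypU (3 / 2) 3 (2 * Complex.I * ζ)

namespace HAdd
open MeasureTheory Set Filter Topology

/-- `y(x) = 1/(1-e^{-x})`. -/
noncomputable def Y (x : ℝ) : ℝ := (1 - Real.exp (-x))⁻¹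

noncomputable def W (p b a : ℂ) (x : ℝ) : ℂ :=
  if 0 < x then Complex.exp (-p * ((Y x : ℂ) - 1) + b * (Real.log (Y x) : ℂ) - a * x) else 0

lemma den_pos {x : ℝ} (hx : 0 < x) : 0 < 1 - Real.exp (-x) := by
  have : Real.exp (-x) < 1 := by rw [Real.exp_lt_one_iff]; linarith
  linarith

lemma Y_gt {x : ℝ} (hx : 0 < x) : 1 < Y x := by
  unfold Y
  rw [one_lt_inv₀ (den_pos hx)]
  linarith [Real.exp_pos (-x)]

lemma Y_inv_le {x : ℝ} : (Y x)⁻¹ ≤ x := by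
  unfold Y
  rw [inv_inv]
  linarith [Real.add_one_le_exp (-x)]

lemma exp_eq (x : ℝ) : Real.exp (-x) = 1 - (Y x)⁻¹ := by
  unfold Y; rw [inv_inv]; ring

lemma Y_deriv {x : ℝ} (hx : 0 < x) : HasDerivAt Y (-(Y x ^ 2 - Y x)) x := by
  have h1 : HasDerivAt (fun x : ℝ => 1 - Real.exp (-x)) (Real.exp (-x)) x := by
    have := ((hasDerivAt_neg x).exp).const_sub 1
    simpa using this
  have h2 := h1.inv (den_pos hx).ne'
  have h3 : (-Real.exp (-x) / (1 - Real.exp (-x)) ^ 2) = -(Y x ^ 2 - Y x) := by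
    have := (den_pos hx).ne'
    unfold Y
    field_simp
    ring
  rw [← h3]
  exact h2

lemma W_pos {p b a : ℂ} {x : ℝ} (hx : 0 < x) : W p b a x =
    Complex.exp (-p * ((Y x : ℂ) - 1) + b * (Real.log (Y x) : ℂ) - a * x) := by
  simp [W, hx]

lemma W_neg {p b a : ℂ} {x : ℝ} (hx : x ≤ 0) : W p b a x = 0 := by
  simp [W, not_lt.mpr hx]

lemma W_succ (p b a : ℂ) (x : ℝ) : W p (b + 1) a x = (Y x : ℂ) * W p b a x := by
  rcases le_or_gt x 0 with hx | hx
  · simp [W_neg hx]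
  · rw [W_pos hx, W_pos hx]
    have hy : 0 < Y x := by linarith [Y_gt hx]
    have : (Y x : ℂ) = Complex.exp (Real.log (Y x) : ℂ) := by
      rw [← Complex.ofReal_exp, Real.exp_log hy]
    conv_rhs => rw [this, ← Complex.exp_add, ← this]
    congr 1; ring

lemma W_mul (p q b c a d : ℂ) (x : ℝ) :
    W p b a x * W q c d x = W (p + q) (b + c) (a + d) x := by
  rcases le_or_gt x 0 with hx | hx
  · simp [W_neg hx]
  · rw [W_pos hx, W_pos hx, W_pos hx, ← Complex.exp_add]
    congr 1; ring

lemma W_exp (p b a c : ℂ) (x : ℝ) :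
    Complex.exp (c * x) * W p b a x = W p b (a - c) x := by
  rcases le_or_gt x 0 with hx | hx
  · simp [W_neg hx]
  · rw [W_pos hx, W_pos hx, ← Complex.exp_add]
    congr 1; ring

lemma W_bound (p b a : ℂ) (hp : 0 < p.re) :
    ∃ C : ℝ, 0 ≤ C ∧ ∀ x : ℝ, 0 < x → ‖W p b a x‖ ≤ C * Real.exp (-a.re * x) := by
  set B : ℝ := |b.re| + 1 with hB
  have hBp : 0 < B := by positivity
  refine ⟨Real.exp (p.re + B * Real.log (B / p.re)), (Real.exp_pos _).le, fun x hx => ?_⟩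
  rw [W_pos hx, Complex.norm_exp, ← Real.exp_add]
  apply Real.exp_le_exp.mpr
  have hy := Y_gt hx
  have hlog : 0 ≤ Real.log (Y x) := Real.log_nonneg hy.le
  have h1 : b.re * Real.log (Y x) ≤ B * Real.log (Y x) := by
    apply mul_le_mul_of_nonneg_right _ hlog
    linarith [le_abs_self b.re]
  have h2 : Real.log (Y x) ≤ Y x / (B / p.re) - 1 + Real.log (B / p.re) := by
    have hc : 0 < B / p.re := by positivity
    have := Real.log_le_sub_one_of_pos (show 0 < Y x / (B / p.re) by positivity)
    rw [Real.log_div (by positivity) hc.ne'] at this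
    linarith
  have h3 : B * Real.log (Y x) ≤ p.re * Y x - B + B * Real.log (B / p.re) := by
    have := mul_le_mul_of_nonneg_left h2 hBp.le
    have e : B * (Y x / (B / p.re) - 1 + Real.log (B / p.re)) =
      p.re * Y x - B + B * Real.log (B / p.re) := by field_simp
    linarith
  have e : (-p * ((Y x : ℂ) - 1) + b * (Real.log (Y x) : ℂ) - a * x).re =
    -p.re * (Y x - 1) + b.re * Real.log (Y x) - a.re * x := by
    simp
  rw [e]
  nlinarith

lemma W_bound_sq (p b a : ℂ) (hp : 0 < p.re) (ha : 0 < a.re) :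
    ∃ C : ℝ, 0 ≤ C ∧ ∀ x : ℝ, ‖W p b a x‖ ≤ C * x ^ 2 := by
  obtain ⟨C, hC, h⟩ := W_bound p (b + 1 + 1) a hp
  refine ⟨C, hC, fun x => ?_⟩
  rcases le_or_gt x 0 with hx | hx
  · simp only [W_neg hx, norm_zero]; positivity
  · have h1 := h x hx
    have hy := Y_gt hx
    have hy0 : 0 < Y x := by linarith
    rw [W_succ, W_succ, norm_mul, norm_mul, Complex.norm_real, Real.norm_of_nonneg hy0.le] at h1
    have h2 : Real.exp (-a.re * x) ≤ 1 := by
      rw [Real.exp_le_one_iff]; nlinarith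
    have h3 : Y x * (Y x * ‖W p b a x‖) ≤ C := h1.trans (by nlinarith)
    have h4 : ‖W p b a x‖ = (Y x * (Y x * ‖W p b a x‖)) * ((Y x)⁻¹) ^ 2 := by
      field_simp
    rw [h4]
    have h5 := @Y_inv_le x
    have h6 : 0 < (Y x)⁻¹ := by positivity
    gcongr

lemma W_hasDerivAt (p b a : ℂ) (hp : 0 < p.re) (ha : 0 < a.re) (x : ℝ) :
    HasDerivAt (W p b a) (p * W p (b + 1 + 1) a x - (p + b) * W p (b + 1) a x
      + (b - a) * W p b a x) x := by
  rcases lt_trichotomy x 0 with hx | hx | hx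
  · have : W p b a =ᶠ[𝓝 x] fun _ => 0 := by
      filter_upwards [Iio_mem_nhds hx] with z hz
      exact W_neg (le_of_lt hz)
    simp only [W_neg hx.le, mul_zero, sub_zero, add_zero]
    exact (hasDerivAt_const x (0 : ℂ)).congr_of_eventuallyEq this
  · subst hx
    simp only [W_neg le_rfl, mul_zero, sub_zero, add_zero]
    obtain ⟨C, hC, h⟩ := W_bound_sq p b a hp ha
    rw [hasDerivAt_iff_isLittleO]
    simp only [W_neg le_rfl, sub_zero, smul_zero]
    have h1 : (W p b a) =O[𝓝 0] fun x : ℝ => x ^ 2 := by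
      apply Asymptotics.IsBigO.of_bound C
      filter_upwards with z
      simpa using h z
    refine h1.trans_isLittleO ?_
    have := Asymptotics.isLittleO_pow_pow (𝕜 := ℝ) (m := 1) (n := 2) (by norm_num)
    simpa using this
  · have heq : W p b a =ᶠ[𝓝 x] fun x : ℝ =>
        Complex.exp (-p * ((Y x : ℂ) - 1) + b * (Real.log (Y x) : ℂ) - a * x) := by
      filter_upwards [Ioi_mem_nhds hx] with z hz
      exact W_pos hz
    have hy := Y_gt hx
    have hy0 : Y x ≠ 0 := by linarith
    have d1 : HasDerivAt (fun x => (Y x : ℂ)) ((-(Y x ^ 2 - Y x) : ℝ) : ℂ) x :=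
      (Y_deriv hx).ofReal_comp
    have d2 : HasDerivAt (fun x => (Real.log (Y x) : ℂ)) ((-(Y x ^ 2 - Y x) / Y x : ℝ) : ℂ) x :=
      ((Y_deriv hx).log hy0).ofReal_comp
    have d3 : HasDerivAt (fun x : ℝ => (x : ℂ)) 1 x := by
      simpa using (hasDerivAt_id x).ofReal_comp
    have d := ((((d1.sub_const 1).const_mul (-p)).add (d2.const_mul b)).sub (d3.const_mul a)).cexp
    refine (HasDerivAt.congr_of_eventuallyEq ?_ heq)
    refine HasDerivAt.congr_deriv d ?_
    rw [W_succ, W_succ, W_pos hx]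
    simp only [Pi.add_apply, Pi.sub_apply]
    have hyc : (Y x : ℂ) ≠ 0 := by exact_mod_cast hy0
    push_cast
    field_simp
    ring

lemma W_cont (p b a : ℂ) (hp : 0 < p.re) (ha : 0 < a.re) : Continuous (W p b a) :=
  continuous_iff_continuousAt.mpr fun x => (W_hasDerivAt p b a hp ha x).continuousAt

lemma W_int (p b a : ℂ) (hp : 0 < p.re) (ha : 0 < a.re) : Integrable (W p b a) := by
  obtain ⟨C, hC, h⟩ := W_bound p b a hp
  have hi : IntegrableOn (W p b a) (Ioi 0) := by
    refine Integrable.mono' ((exp_neg_integrableOn_Ioi 0 ha).const_mul C)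
      (W_cont p b a hp ha).aestronglyMeasurable ?_
    filter_upwards [ae_restrict_mem measurableSet_Ioi] with x hx
    exact h x hx
  refine (integrableOn_iff_integrable_of_support_subset ?_).mp hi
  intro x hx
  by_contra h'
  exact hx (W_neg (not_lt.mp h'))

open FourierTransform in
lemma W_fourier_int (p b a : ℂ) (hp : 0 < p.re) (ha : 0 < a.re) :
    Integrable (𝓕 (W p b a)) := by
  have hd : ∀ b, deriv (W p b a) = fun x => p * W p (b + 1 + 1) a x - (p + b) * W p (b + 1) a x
      + (b - a) * W p b a x := fun b => funext fun x => (W_hasDerivAt p b a hp ha x).deriv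
  have hdi : ∀ b, Differentiable ℝ (W p b a) := fun b x =>
    (W_hasDerivAt p b a hp ha x).differentiableAt
  have hint : ∀ b, Integrable (W p b a) := fun b => W_int p b a hp ha
  have hI1 : ∀ b, Integrable (deriv (W p b a)) := by
    intro b
    rw [hd]
    exact (((hint _).const_mul _).sub ((hint _).const_mul _)).add ((hint _).const_mul _)
  have hdi2 : Differentiable ℝ (deriv (W p b a)) := by
    rw [hd]
    exact (((hdi _).const_mul _).sub ((hdi _).const_mul _)).add ((hdi _).const_mul _)
  have hI2 : Integrable (deriv (deriv (W p b a))) := by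
    have : deriv (deriv (W p b a)) = fun x => p * deriv (W p (b + 1 + 1) a) x
        - (p + b) * deriv (W p (b + 1) a) x + (b - a) * deriv (W p b a) x := by
      conv_lhs => rw [hd b]
      funext x
      exact ((((hdi _ x).hasDerivAt.const_mul _).sub ((hdi _ x).hasDerivAt.const_mul _)).add
        ((hdi _ x).hasDerivAt.const_mul _)).deriv
    rw [this]
    exact (((hI1 _).const_mul _).sub ((hI1 _).const_mul _)).add ((hI1 _).const_mul _)
  have e1 := Real.fourier_deriv (hint b) (hdi b) (hI1 b)
  have e2 := Real.fourier_deriv (hI1 b) hdi2 hI2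
  have bd : ∀ (f : ℝ → ℂ) (w : ℝ), ‖𝓕 f w‖ ≤ ∫ x, ‖f x‖ := fun f w =>
    VectorFourier.norm_fourierIntegral_le_integral_norm _ _ _ f w
  have hcont : Continuous (𝓕 (W p b a)) :=
    VectorFourier.fourierIntegral_continuous Real.continuous_fourierChar
      (by exact continuous_inner) (hint b)
  set A := ∫ x, ‖W p b a x‖
  set B := ∫ x, ‖deriv (deriv (W p b a)) x‖
  refine Integrable.mono' (integrable_inv_one_add_sq.const_mul (A + B))
    hcont.aestronglyMeasurable (Eventually.of_forall fun w => ?_)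
  have b1 := bd (W p b a) w
  have b2 := bd (deriv (deriv (W p b a))) w
  rw [e2, e1] at b2
  simp only [norm_smul, norm_mul, Complex.norm_I, Complex.norm_real, Complex.norm_ofNat,
    Real.norm_eq_abs, abs_of_pos Real.pi_pos, mul_one] at b2
  have hpi : (1 : ℝ) ≤ (2 * Real.pi) ^ 2 := by nlinarith [Real.pi_gt_three]
  have b3 : w ^ 2 * ‖𝓕 (W p b a) w‖ ≤ B := by
    refine le_trans ?_ b2
    have : 2 * Real.pi * |w| * (2 * Real.pi * |w| * ‖𝓕 (W p b a) w‖) =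
      (2 * Real.pi) ^ 2 * (w ^ 2 * ‖𝓕 (W p b a) w‖) := by rw [← sq_abs w]; ring
    rw [this]
    have : 0 ≤ w ^ 2 * ‖𝓕 (W p b a) w‖ := by positivity
    nlinarith
  rw [← div_eq_mul_inv, le_div_iff₀ (by positivity)]
  linarith

open FourierTransform in
lemma parseval (p q b c a d : ℂ) (hp : 0 < p.re) (hq : 0 < q.re) (ha : 0 < a.re)
    (hd : 0 < d.re) :
    ∫ τ : ℝ, (∫ x, W p b (a - Complex.I * τ) x) * (∫ x, W q c (d + Complex.I * τ) x) =
      2 * Real.pi * ∫ x, W (p + q) (b + c) (a + d) x := by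
  have hF : ∀ τ : ℝ, ∫ x, W p b (a - Complex.I * τ) x = 𝓕⁻ (W p b a) (τ / (2 * Real.pi)) := by
    intro τ
    rw [Real.fourierInv_eq']
    congr 1; ext x
    rw [smul_eq_mul, ← W_exp]
    congr 2
    have : (Real.pi : ℂ) ≠ 0 := by exact_mod_cast Real.pi_ne_zero
    simp
    field_simp
  have hG : ∀ τ : ℝ, ∫ x, W q c (d + Complex.I * τ) x = 𝓕 (W q c d) (τ / (2 * Real.pi)) := by
    intro τ
    rw [Real.fourier_eq']
    congr 1; ext x
    rw [smul_eq_mul, show d + Complex.I * τ = d - (-(Complex.I * τ)) by ring, ← W_exp]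
    congr 2
    have : (Real.pi : ℂ) ≠ 0 := by exact_mod_cast Real.pi_ne_zero
    simp
    field_simp
  simp_rw [hF, hG]
  rw [Measure.integral_comp_div (fun w => 𝓕⁻ (W p b a) w * 𝓕 (W q c d) w) (2 * Real.pi)]
  rw [abs_of_pos (by positivity), Complex.real_smul]
  push_cast
  congr 1
  have hgi := W_fourier_int q c d hq hd
  have inv := (W_cont q c d hq hd).fourierInv_fourier_eq (W_int q c d hq hd) hgi
  have key : ∫ w, 𝓕⁻ (W p b a) w * 𝓕 (W q c d) w =
      ∫ x, W p b a x * 𝓕⁻ (𝓕 (W q c d)) x := by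
    have hrefl : Integrable (fun w => 𝓕 (W q c d) (-w)) := hgi.comp_neg
    have := VectorFourier.integral_fourierIntegral_smul_eq_flip (μ := volume) (ν := volume)
      (L := innerₗ ℝ) Real.continuous_fourierChar (by exact continuous_inner)
      (W_int p b a hp ha) hrefl
    have e1 : ∫ w, 𝓕⁻ (W p b a) w * 𝓕 (W q c d) w =
        ∫ w, 𝓕 (W p b a) w * 𝓕 (W q c d) (-w) := by
      rw [← integral_neg_eq_self]
      congr 1; ext w
      rw [Real.fourierInv_eq_fourier_neg, neg_neg]
    rw [e1, Real.fourierInv_eq_fourier_comp_neg]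
    refine this.trans ?_
    congr 1; ext x
    rw [smul_eq_mul]
    congr 1
    simp [VectorFourier.fourierIntegral, Real.fourier_eq, mul_comm]
  rw [key, inv]
  simp_rw [W_mul]

lemma Y_image : (fun x => Y x - 1) '' Ioi 0 = Ioi 0 := by
  ext t
  simp only [mem_image, mem_Ioi]
  constructor
  · rintro ⟨x, hx, rfl⟩
    linarith [Y_gt hx]
  · intro ht
    refine ⟨-Real.log (1 - (1 + t)⁻¹), ?_, ?_⟩
    · have h1 : (1 + t)⁻¹ < 1 := inv_lt_one_of_one_lt₀ (by linarith)
      have h2 : 0 < (1 + t)⁻¹ := by positivity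
      have := Real.log_neg (show 0 < 1 - (1 + t)⁻¹ by linarith) (by linarith)
      linarith
    · have h1 : (1 + t)⁻¹ < 1 := inv_lt_one_of_one_lt₀ (by linarith)
      unfold Y
      rw [neg_neg, Real.exp_log (by linarith)]
      simp

lemma Y_inj : InjOn (fun x => Y x - 1) (Ioi 0) := by
  intro x _ z _ h
  simp only [Y, sub_left_inj, inv_inj] at h
  have := Real.exp_injective (sub_right_injective h)
  linarith

lemma hypU_eq (a b z : ℂ) : hypU a b z = (Complex.Gamma a)⁻¹ * ∫ x, W z b a x := by
  unfold hypU
  congr 1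
  conv_lhs => rw [← Y_image]
  rw [integral_image_eq_integral_abs_deriv_smul measurableSet_Ioi
    (fun x hx => ((Y_deriv hx).sub_const 1).hasDerivWithinAt) Y_inj]
  rw [← setIntegral_eq_integral_of_forall_compl_eq_zero (s := Ioi 0)
    (f := W z b a) (fun x hx => W_neg (not_lt.mp hx))]
  refine setIntegral_congr_fun measurableSet_Ioi fun x hx => ?_
  have hx : 0 < x := hx
  have hy := Y_gt hx
  have hy0 : 0 < Y x := by linarith
  have ht : 0 < Y x - 1 := by linarith
  have hlt : Real.log (Y x - 1) = Real.log (Y x) - x := by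
    have : Y x - 1 = Y x * Real.exp (-x) := by rw [exp_eq x]; field_simp
    rw [this, Real.log_mul hy0.ne' (Real.exp_pos _).ne', Real.log_exp]; ring
  have hj : |-(Y x ^ 2 - Y x)| = Y x * (Y x - 1) := by
    rw [abs_neg, abs_of_pos (by nlinarith)]; ring
  have ey : (Y x : ℂ) = Complex.exp (Real.log (Y x) : ℂ) := by
    rw [← Complex.ofReal_exp, Real.exp_log hy0]
  have et : ((Y x - 1 : ℝ) : ℂ) = Complex.exp (Real.log (Y x) - x : ℂ) := by
    rw [← Complex.ofReal_sub, ← hlt, ← Complex.ofReal_exp, Real.exp_log ht]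
  have e1 : ((1 : ℂ) + ((Y x - 1 : ℝ) : ℂ)) = (Y x : ℂ) := by push_cast; ring
  rw [W_pos hx, hj, Complex.real_smul, e1,
    Complex.cpow_def_of_ne_zero (by exact_mod_cast ht.ne'),
    Complex.cpow_def_of_ne_zero (by exact_mod_cast hy0.ne'),
    ← Complex.ofReal_log ht.le, ← Complex.ofReal_log hy0.le, hlt, Complex.ofReal_mul, et]
  have : (Y x : ℂ) - 1 = ((Y x - 1 : ℝ) : ℂ) := by push_cast; ring
  rw [this, et]
  nth_rewrite 1 [ey]
  simp only [← Complex.exp_add]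
  congr 1
  push_cast
  ring

lemma parD_eq (s ξ : ℂ) : parD (2 * s - 1 / 2) ((1 + Complex.I) * ξ) =
    (2 : ℂ) ^ (s - 3 / 4) * Complex.exp (-(Complex.I * ξ ^ 2) / 2) * ((1 + Complex.I) * ξ) *
      ((Complex.Gamma (3 / 4 - s))⁻¹ * ∫ x, W (Complex.I * ξ ^ 2) (3 / 2) (3 / 4 - s) x) := by
  have h : ((1 + Complex.I) * ξ) ^ 2 = 2 * Complex.I * ξ ^ 2 := by
    rw [mul_pow, show (1 + Complex.I) ^ 2 = 1 + 2 * Complex.I + Complex.I ^ 2 by ring,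
      Complex.I_sq]
    ring
  rw [parD, hypU_eq, h, show (2 * s - 1 / 2 - 1) / 2 = s - 3 / 4 by ring,
    show (1 - (2 * s - 1 / 2)) / 2 = 3 / 4 - s by ring,
    show 2 * Complex.I * ξ ^ 2 / 2 = Complex.I * ξ ^ 2 by ring,
    show -(2 * Complex.I * ξ ^ 2) / 4 = -(Complex.I * ξ ^ 2) / 2 by ring]

lemma Gamma_three_halves : Complex.Gamma (3 / 2) = (Real.sqrt Real.pi : ℂ) / 2 := by
  rw [show (3 / 2 : ℂ) = 1 / 2 + 1 by norm_num, Complex.Gamma_add_one _ (by norm_num),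
    show (1 / 2 : ℂ) = ((1 / 2 : ℝ) : ℂ) by norm_num, Complex.Gamma_ofReal,
    Real.Gamma_one_half_eq]
  push_cast
  ring

end HAdd

/-- Addition theorem for the order-one Hankel function of the second kind. -/
theorem hankelH12_addition (ξ η σ : ℂ) (hξ : (ξ ^ 2).im < 0) (hη : (η ^ 2).im < 0)
    (hσ : |σ.re| < 3 / 4) :
    ξ * η * hankelH12 ((ξ ^ 2 + η ^ 2) / 2) =
      -((2 : ℂ) ^ ((3 : ℂ) / 2) * (ξ ^ 2 + η ^ 2) / ((Real.pi : ℂ) ^ 2 * Complex.I)) *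
        (Complex.I * ∫ τ : ℝ,
          Complex.Gamma (3 / 4 - (σ + Complex.I * τ)) *
          Complex.Gamma (3 / 4 + (σ + Complex.I * τ)) *
          parD (2 * (σ + Complex.I * τ) - 1 / 2) ((1 + Complex.I) * ξ) *
          parD (-2 * (σ + Complex.I * τ) - 1 / 2) ((1 + Complex.I) * η)) := by
  have hp : 0 < (Complex.I * ξ ^ 2).re := by simpa [Complex.mul_re] using hξ
  have hq : 0 < (Complex.I * η ^ 2).re := by simpa [Complex.mul_re] using hη
  obtain ⟨hσ1, hσ2⟩ := abs_lt.mp hσ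
  have ha : 0 < (3 / 4 - σ).re := by
    have : ((3 : ℂ) / 4).re = 3 / 4 := by norm_num
    rw [Complex.sub_re, this]; linarith
  have hd : 0 < (3 / 4 + σ).re := by
    have : ((3 : ℂ) / 4).re = 3 / 4 := by norm_num
    rw [Complex.add_re, this]; linarith
  have key := HAdd.parseval (Complex.I * ξ ^ 2) (Complex.I * η ^ 2) (3 / 2) (3 / 2)
    (3 / 4 - σ) (3 / 4 + σ) hp hq ha hd
  rw [show (3 / 2 + 3 / 2 : ℂ) = 3 by norm_num,
    show 3 / 4 - σ + (3 / 4 + σ) = 3 / 2 by ring] at key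
  have h2 : (2 : ℂ) ^ (-(3 / 2) : ℂ) * (2 : ℂ) ^ ((3 : ℂ) / 2) = 1 := by
    rw [← Complex.cpow_add _ _ two_ne_zero]; norm_num
  have hint : ∀ τ : ℝ,
      Complex.Gamma (3 / 4 - (σ + Complex.I * τ)) *
          Complex.Gamma (3 / 4 + (σ + Complex.I * τ)) *
          parD (2 * (σ + Complex.I * τ) - 1 / 2) ((1 + Complex.I) * ξ) *
          parD (-2 * (σ + Complex.I * τ) - 1 / 2) ((1 + Complex.I) * η) =
      ((2 : ℂ) ^ (-(3 / 2) : ℂ) * Complex.exp (-(Complex.I * (ξ ^ 2 + η ^ 2)) / 2) *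
        (2 * Complex.I * ξ * η)) *
      ((∫ x, HAdd.W (Complex.I * ξ ^ 2) (3 / 2) (3 / 4 - σ - Complex.I * τ) x) *
        (∫ x, HAdd.W (Complex.I * η ^ 2) (3 / 2) (3 / 4 + σ + Complex.I * τ) x)) := by
    intro τ
    set s : ℂ := σ + Complex.I * τ with hs
    have hsre : s.re = σ.re := by simp [hs]
    have h34 : ((3 : ℂ) / 4).re = 3 / 4 := by norm_num
    have g1 : Complex.Gamma (3 / 4 - s) ≠ 0 :=
      Complex.Gamma_ne_zero_of_re_pos (by rw [Complex.sub_re, h34, hsre]; linarith)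
    have g2 : Complex.Gamma (3 / 4 + s) ≠ 0 :=
      Complex.Gamma_ne_zero_of_re_pos (by rw [Complex.add_re, h34, hsre]; linarith)
    rw [show -2 * s = 2 * (-s) by ring, HAdd.parD_eq, HAdd.parD_eq,
      show 3 / 4 - -s = 3 / 4 + s by ring,
      show 3 / 4 - σ - Complex.I * τ = 3 / 4 - s by rw [hs]; ring,
      show 3 / 4 + σ + Complex.I * τ = 3 / 4 + s by rw [hs]; ring,
      show (-(3 / 2) : ℂ) = (s - 3 / 4) + (-s - 3 / 4) by ring,
      Complex.cpow_add _ _ two_ne_zero,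
      show -(Complex.I * (ξ ^ 2 + η ^ 2)) / 2 =
        -(Complex.I * ξ ^ 2) / 2 + -(Complex.I * η ^ 2) / 2 by ring, Complex.exp_add,
      show 2 * Complex.I * ξ * η = ((1 + Complex.I) * ξ) * ((1 + Complex.I) * η) by
        linear_combination (-ξ * η) * Complex.I_sq]
    generalize Complex.Gamma (3 / 4 - s) = G1 at *
    generalize Complex.Gamma (3 / 4 + s) = G2 at *
    field_simp
  simp_rw [hint]
  rw [MeasureTheory.integral_const_mul, key, hankelH12, HAdd.hypU_eq, HAdd.Gamma_three_halves,
    show 2 * Complex.I * ((ξ ^ 2 + η ^ 2) / 2) = Complex.I * ξ ^ 2 + Complex.I * η ^ 2 by ring,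
    show -Complex.I * ((ξ ^ 2 + η ^ 2) / 2 - Real.pi) =
      -(Complex.I * (ξ ^ 2 + η ^ 2)) / 2 + Real.pi * Complex.I by ring,
    Complex.exp_add, Complex.exp_pi_mul_I]
  generalize (∫ x, HAdd.W (Complex.I * ξ ^ 2 + Complex.I * η ^ 2) 3 (3 / 2) x) = J
  generalize Complex.exp (-(Complex.I * (ξ ^ 2 + η ^ 2)) / 2) = E
  have hpi : (Real.pi : ℂ) = (Real.sqrt Real.pi : ℂ) ^ 2 := by
    rw [← Complex.ofReal_pow, Real.sq_sqrt Real.pi_pos.le]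
  have hr : (Real.sqrt Real.pi : ℂ) ≠ 0 := by
    exact_mod_cast (Real.sqrt_pos.mpr Real.pi_pos).ne'
  rw [hpi]
  generalize (Real.sqrt Real.pi : ℂ) = r at *
  have hI := Complex.I_ne_zero
  have e : -((2 : ℂ) ^ ((3 : ℂ) / 2) * (ξ ^ 2 + η ^ 2) / ((r ^ 2) ^ 2 * Complex.I)) *
      (Complex.I * ((2 : ℂ) ^ (-(3 / 2) : ℂ) * E * (2 * Complex.I * ξ * η) *
        (2 * r ^ 2 * J))) =
      ((2 : ℂ) ^ (-(3 / 2) : ℂ) * (2 : ℂ) ^ ((3 : ℂ) / 2)) *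
      (-(ξ ^ 2 + η ^ 2) / ((r ^ 2) ^ 2 * Complex.I) * 
      (Complex.I * (E * (2 * Complex.I * ξ * η) * (2 * r ^ 2 * J)))) := by ring
  rw [e, h2]
  field_simp
end

section
/- Let ξ, η, σ ∈ ℂ with Re(ξ²) > 0, Re(η²) > 0, and |Re σ| < 3/4. Then ξη · K₁((ξ² + η²)/4) = (2^{1/2}(ξ² + η²)/(π i)) ∫_{σ−i∞}^{σ+i∞} Γ(3/4 − s) Γ(3/4 + s) D_{2s−1/2}(ξ) D_{−2s−1/2}(η) ds. (Note that Re((ξ²+η²)/4) > 0, so all functions appearing are in the domains of the stated representations.) -/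
/-- Order-one modified Bessel function of the second kind,
`K₁(z) = √π e^{-z} (2z) U(3/2, 3, 2z)`, valid for `Re z > 0`. -/
noncomputable def besselK1 (z : ℂ) : ℂ :=
  (Real.sqrt Real.pi : ℂ) * Complex.exp (-z) * (2 * z) * hypU (3 / 2) 3 (2 * z)

open MeasureTheory Filter Topology Set
open scoped FourierTransform

/-- Auxiliary kernel. -/
noncomputable def auxT (x : ℝ) : ℝ := (Real.exp x - 1)⁻¹

/-- Auxiliary logarithm. -/
noncomputable def auxL (x : ℝ) : ℝ := Real.log (1 - Real.exp (-x))

/-- Auxiliary function after the substitution `t = 1/(e^x-1)`. -/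
noncomputable def psi (c m : ℂ) (r : ℝ) (x : ℝ) : ℂ :=
  if 0 < x then Complex.exp (-c * (auxT x : ℂ) - m * x - (r : ℂ) * (auxL x : ℂ)) else 0

lemma aux_pos {x : ℝ} (hx : 0 < x) : 0 < 1 - Real.exp (-x) := by
  have : Real.exp (-x) < 1 := by rw [← Real.exp_zero]; exact Real.exp_lt_exp.2 (by linarith)
  linarith

lemma auxT_pos {x : ℝ} (hx : 0 < x) : 0 < auxT x := by
  have := Real.one_lt_exp_iff.2 hx
  unfold auxT
  exact inv_pos.2 (by linarith)

lemma one_add_auxT {x : ℝ} (hx : 0 < x) : 1 + auxT x = (1 - Real.exp (-x))⁻¹ := by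
  have h1 := Real.one_lt_exp_iff.2 hx
  have h2 : Real.exp x - 1 ≠ 0 := by linarith
  have h3 := (aux_pos hx).ne'
  have h0 := (Real.exp_pos x).ne'
  unfold auxT
  rw [Real.exp_neg] at *
  have h4 : 1 - (Real.exp x)⁻¹ = (Real.exp x - 1) / Real.exp x := by field_simp
  rw [h4, inv_div]
  field_simp
  ring

lemma log_one_add_auxT {x : ℝ} (hx : 0 < x) : Real.log (1 + auxT x) = - auxL x := by
  rw [one_add_auxT hx, Real.log_inv, auxL]

lemma auxT_eq {x : ℝ} (hx : 0 < x) : auxT x = Real.exp (-x) * (1 + auxT x) := by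
  rw [one_add_auxT hx, auxT, Real.exp_neg]
  have h1 := Real.one_lt_exp_iff.2 hx
  have h2 : Real.exp x - 1 ≠ 0 := by linarith
  have h0 := (Real.exp_pos x).ne'
  have h4 : 1 - (Real.exp x)⁻¹ = (Real.exp x - 1) / Real.exp x := by field_simp
  rw [h4]
  field_simp

lemma log_auxT {x : ℝ} (hx : 0 < x) : Real.log (auxT x) = - x - auxL x := by
  have h := auxT_pos hx
  rw [auxT_eq hx, Real.log_mul (Real.exp_pos _).ne' (by linarith), Real.log_exp,
    log_one_add_auxT hx]
  ring

lemma one_le_mul_auxT {x : ℝ} (hx : 0 < x) : 1 ≤ x * (1 + auxT x) := by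
  rw [one_add_auxT hx, ← div_eq_mul_inv, one_le_div (aux_pos hx)]
  have := Real.add_one_le_exp (-x)
  linarith

lemma norm_psi {c m : ℂ} {r x : ℝ} (hx : 0 < x) :
    ‖psi c m r x‖ = Real.exp (-c.re * auxT x - m.re * x - r * auxL x) := by
  rw [psi, if_pos hx, Complex.norm_exp]
  congr 1
  simp

lemma psi_bound (c m : ℂ) (r : ℝ) (hc : 0 < c.re) :
    ∃ C : ℝ, 0 ≤ C ∧ ∀ x : ℝ, 0 < x → ‖psi c m r x‖ ≤ C * Real.exp (-m.re * x) ∧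
      ‖psi c m r x‖ ≤ C * x ^ 2 * Real.exp (-m.re * x) := by
  obtain ⟨N, hN⟩ := exists_nat_ge r
  refine ⟨(N + 2).factorial * Real.exp c.re / c.re ^ (N + 2), by positivity, fun x hx => ?_⟩
  have hT := auxT_pos hx
  have key : Real.exp (-c.re * auxT x) * (1 + auxT x) ^ (N + 2) ≤
      (N + 2).factorial * Real.exp c.re / c.re ^ (N + 2) := by
    have h := Real.pow_div_factorial_le_exp (x := c.re * (1 + auxT x)) (by positivity) (N + 2)
    rw [div_le_iff₀ (by positivity), mul_pow, mul_add, mul_one, Real.exp_add] at h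
    rw [le_div_iff₀ (by positivity)]
    have e : Real.exp (-c.re * auxT x) * Real.exp (c.re * auxT x) = 1 := by
      rw [← Real.exp_add]; simp
    calc _ = Real.exp (-c.re * auxT x) * (c.re ^ (N + 2) * (1 + auxT x) ^ (N + 2)) := by ring
      _ ≤ Real.exp (-c.re * auxT x) * (Real.exp c.re * Real.exp (c.re * auxT x) *
          (N + 2).factorial) := by gcongr
      _ = (Real.exp (-c.re * auxT x) * Real.exp (c.re * auxT x)) * (Real.exp c.re *
          (N + 2).factorial) := by ring
      _ = _ := by rw [e]; ring
  have hn : ‖psi c m r x‖ = Real.exp (-c.re * auxT x) * Real.exp (r * Real.log (1 + auxT x)) *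
      Real.exp (-m.re * x) := by
    rw [norm_psi hx, log_one_add_auxT hx, ← Real.exp_add, ← Real.exp_add]
    congr 1; ring
  have hr : Real.exp (r * Real.log (1 + auxT x)) ≤ (1 + auxT x) ^ N := by
    have hl : 0 ≤ Real.log (1 + auxT x) := Real.log_nonneg (by linarith)
    calc _ ≤ Real.exp (N * Real.log (1 + auxT x)) := by gcongr
      _ = _ := by rw [Real.exp_nat_mul, Real.exp_log (by linarith)]
  rw [hn]
  constructor
  · gcongr
    refine le_trans ?_ key
    gcongr
    refine hr.trans ?_
    exact pow_le_pow_right₀ (by linarith) (by omega)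
  · refine mul_le_mul_of_nonneg_right ?_ (Real.exp_pos _).le
    calc _ ≤ Real.exp (-c.re * auxT x) * (1 + auxT x) ^ N * 1 := by rw [mul_one]; gcongr
      _ ≤ Real.exp (-c.re * auxT x) * (1 + auxT x) ^ N * (x * (1 + auxT x)) ^ 2 := by
          gcongr; exact one_le_pow₀ (one_le_mul_auxT hx)
      _ = Real.exp (-c.re * auxT x) * (1 + auxT x) ^ (N + 2) * x ^ 2 := by ring
      _ ≤ _ := by gcongr

lemma hasDerivAt_auxT {x : ℝ} (hx : 0 < x) :
    HasDerivAt auxT (-(Real.exp (-x) * (1 + auxT x) ^ 2)) x := by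
  have h1 := Real.one_lt_exp_iff.2 hx
  have h2 : Real.exp x - 1 ≠ 0 := by linarith
  have h := ((Real.hasDerivAt_exp x).sub_const 1).inv h2
  refine h.congr_deriv ?_
  rw [auxT, Real.exp_neg]
  have h0 := (Real.exp_pos x).ne'
  field_simp
  ring

lemma hasDerivAt_auxL {x : ℝ} (hx : 0 < x) :
    HasDerivAt auxL (Real.exp (-x) * (1 + auxT x)) x := by
  have h := (((hasDerivAt_neg x).exp).const_sub 1).log (aux_pos hx).ne'
  refine h.congr_deriv ?_
  rw [one_add_auxT hx]
  simp [div_eq_mul_inv]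

lemma psi_shift {c m : ℂ} {r x : ℝ} (hx : 0 < x) (k : ℕ) :
    psi c (m + 1) (r + k) x = psi c m r x * ((Real.exp (-x) * (1 + auxT x) ^ k : ℝ) : ℂ) := by
  have : (1 + auxT x) ^ k = Real.exp (k * (-auxL x)) := by
    rw [← log_one_add_auxT hx, Real.exp_nat_mul, Real.exp_log (by linarith [auxT_pos hx])]
  rw [this, ← Real.exp_add, psi, psi, if_pos hx, if_pos hx, Complex.ofReal_exp, ← Complex.exp_add]
  congr 1
  push_cast
  ring

lemma hasDerivAt_psi (c m : ℂ) (r : ℝ) (hc : 0 < c.re) (hm : 0 < m.re) (x : ℝ) :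
    HasDerivAt (psi c m r) (-m * psi c m r x + c * psi c (m + 1) (r + 2) x
      - r * psi c (m + 1) (r + 1) x) x := by
  rcases lt_trichotomy x 0 with hx | hx | hx
  · have e : psi c m r =ᶠ[𝓝 x] fun _ => 0 := by
      filter_upwards [Iio_mem_nhds hx] with y hy
      rw [psi, if_neg (not_lt.2 (le_of_lt hy))]
    have := (hasDerivAt_const x (0 : ℂ)).congr_of_eventuallyEq e
    refine this.congr_deriv ?_
    simp [psi, not_lt.2 hx.le]
  · subst hx
    obtain ⟨C, hC0, hC⟩ := psi_bound c m r hc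
    have h0 : ∀ m r, psi c m r 0 = 0 := by intro m r; simp [psi]
    simp only [h0]
    rw [hasDerivAt_iff_isLittleO]
    simp only [h0, sub_zero, mul_zero, add_zero, smul_zero]
    have : (fun y : ℝ => psi c m r y) =O[𝓝 0] fun y : ℝ => y ^ 2 := by
      refine Asymptotics.IsBigO.of_bound C (Eventually.of_forall fun y => ?_)
      by_cases hy : 0 < y
      · refine (hC y hy).2.trans ?_
        have : Real.exp (-m.re * y) ≤ 1 := by
          rw [Real.exp_le_one_iff]; nlinarith
        calc _ ≤ C * y ^ 2 * 1 := by gcongr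
          _ = _ := by simp
      · simp only [psi, if_neg hy, norm_zero]; positivity
    refine this.trans_isLittleO ?_
    simpa using (Asymptotics.isLittleO_pow_pow (𝕜 := ℝ) (m := 1) (n := 2) (by norm_num))
  · have e : psi c m r =ᶠ[𝓝 x] fun y : ℝ => Complex.exp (-c * (auxT y : ℂ) - m * y - (r : ℂ) * (auxL y : ℂ)) := by
      filter_upwards [Ioi_mem_nhds hx] with y hy
      rw [psi, if_pos (mem_Ioi.1 hy)]
    have h1 := (hasDerivAt_auxT hx).ofReal_comp.const_mul (-c)
    have h2 := (hasDerivAt_id x).ofReal_comp.const_mul m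
    have h3 := (hasDerivAt_auxL hx).ofReal_comp.const_mul (r : ℂ)
    have := ((h1.sub h2).sub h3).cexp.congr_of_eventuallyEq e
    refine this.congr_deriv ?_
    have s1 := psi_shift (c := c) (m := m) (r := r) hx 1
    have s2 := psi_shift (c := c) (m := m) (r := r) hx 2
    push_cast at s1 s2
    rw [s1, s2, psi, if_pos hx]
    simp
    ring

lemma differentiable_psi (c m : ℂ) (r : ℝ) (hc : 0 < c.re) (hm : 0 < m.re) :
    Differentiable ℝ (psi c m r) := fun x => (hasDerivAt_psi c m r hc hm x).differentiableAt

lemma integrable_psi (c m : ℂ) (r : ℝ) (hc : 0 < c.re) (hm : 0 < m.re) :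
    Integrable (psi c m r) := by
  obtain ⟨C, hC0, hC⟩ := psi_bound c m r hc
  have h0 : IntegrableOn (fun x : ℝ => C * Real.exp (-m.re * x)) (Ioi 0) :=
    (exp_neg_integrableOn_Ioi 0 hm).const_mul C
  have h := h0.integrable_indicator measurableSet_Ioi
  refine h.mono' (differentiable_psi c m r hc hm).continuous.aestronglyMeasurable
    (Eventually.of_forall fun x => ?_)
  by_cases hx : 0 < x
  · rw [indicator_of_mem (mem_Ioi.2 hx)]
    exact (hC x hx).1
  · rw [indicator_of_notMem (by simpa using hx), psi, if_neg hx, norm_zero]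

lemma deriv_psi (c m : ℂ) (r : ℝ) (hc : 0 < c.re) (hm : 0 < m.re) :
    deriv (psi c m r) = fun x => -m * psi c m r x + c * psi c (m + 1) (r + 2) x
      - r * psi c (m + 1) (r + 1) x :=
  funext fun x => (hasDerivAt_psi c m r hc hm x).deriv

lemma integrable_fourier_of_deriv2 {f : ℝ → ℂ} (hf : Integrable f) (df : Differentiable ℝ f)
    (hf1 : Integrable (deriv f)) (df1 : Differentiable ℝ (deriv f))
    (hf2 : Integrable (deriv (deriv f))) : Integrable (𝓕 f) := by
  have e1 := Real.fourier_deriv hf df hf1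
  have e2 := Real.fourier_deriv hf1 df1 hf2
  have b0 : ∀ w, ‖𝓕 f w‖ ≤ ∫ x, ‖f x‖ := fun w =>
    VectorFourier.norm_fourierIntegral_le_integral_norm _ _ _ _ _
  have b2 : ∀ w, ‖𝓕 (deriv (deriv f)) w‖ ≤ ∫ x, ‖deriv (deriv f) x‖ := fun w =>
    VectorFourier.norm_fourierIntegral_le_integral_norm _ _ _ _ _
  set A := ∫ x, ‖f x‖
  set B := ∫ x, ‖deriv (deriv f) x‖
  have hcont : Continuous (𝓕 f) :=
    VectorFourier.fourierIntegral_continuous Real.continuous_fourierChar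
      (by fun_prop) hf
  refine (integrable_inv_one_add_sq.const_mul (A + B)).mono' hcont.aestronglyMeasurable
    (Eventually.of_forall fun w => ?_)
  rw [← div_eq_mul_inv, le_div_iff₀ (by positivity)]
  have h2 := b2 w
  rw [e2, e1] at h2
  simp only [norm_smul, norm_mul, Complex.norm_real, Complex.norm_I, Real.norm_eq_abs,
    Complex.norm_ofNat, abs_of_pos Real.pi_pos] at h2
  have h0 := b0 w
  have hp : (1 : ℝ) ≤ 2 * Real.pi := by linarith [Real.pi_gt_three]
  have h3 : ‖𝓕 f w‖ * w ^ 2 ≤ B := by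
    refine le_trans ?_ h2
    have : w ^ 2 = |w| * |w| := by rw [← sq, sq_abs]
    rw [this]
    have hp2 : 1 ≤ (2 * Real.pi) * (2 * Real.pi) := by nlinarith
    calc _ = 1 * (|w| * |w| * ‖𝓕 f w‖) := by ring
      _ ≤ (2 * Real.pi) * (2 * Real.pi) * (|w| * |w| * ‖𝓕 f w‖) := by gcongr
      _ = _ := by ring
  linarith

lemma integrable_fourier_psi (c m : ℂ) (r : ℝ) (hc : 0 < c.re) (hm : 0 < m.re) :
    Integrable (𝓕 (psi c m r)) := by
  have hm1 : 0 < (m + 1).re := by simp; linarith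
  have hm2 : 0 < (m + 1 + 1).re := by simp; linarith
  have I := fun m r (hm : 0 < m.re) => integrable_psi c m r hc hm
  have D := fun m r (hm : 0 < m.re) => differentiable_psi c m r hc hm
  have ID : ∀ m r, 0 < m.re → Integrable (deriv (psi c m r)) := by
    intro m r hm
    have hm1 : 0 < (m + 1).re := by simp; linarith
    rw [deriv_psi c m r hc hm]
    exact (((I m r hm).const_mul _).add ((I _ _ hm1).const_mul _)).sub ((I _ _ hm1).const_mul _)
  refine integrable_fourier_of_deriv2 (I m r hm) (D m r hm) (ID m r hm) ?_ ?_
  · rw [deriv_psi c m r hc hm]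
    exact (((D m r hm).const_mul _).add ((D _ _ hm1).const_mul _)).sub ((D _ _ hm1).const_mul _)
  · rw [deriv_psi c m r hc hm]
    have e : deriv (fun x => -m * psi c m r x + c * psi c (m + 1) (r + 2) x
      - r * psi c (m + 1) (r + 1) x) = fun x => -m * deriv (psi c m r) x
        + c * deriv (psi c (m + 1) (r + 2)) x - r * deriv (psi c (m + 1) (r + 1)) x := by
      funext x
      exact (((((D m r hm) x).hasDerivAt.const_mul _).add
        (((D _ _ hm1) x).hasDerivAt.const_mul _)).sub (((D _ _ hm1) x).hasDerivAt.const_mul _)).deriv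
    rw [e]
    exact (((ID m r hm).const_mul _).add ((ID _ _ hm1).const_mul _)).sub ((ID _ _ hm1).const_mul _)

lemma fourier_psi (c m : ℂ) (r w : ℝ) :
    𝓕 (psi c m r) w = ∫ x, psi c (m + 2 * Real.pi * Complex.I * w) r x := by
  rw [Real.fourier_real_eq_integral_exp_smul]
  congr 1
  funext x
  by_cases hx : 0 < x
  · simp only [psi, if_pos hx, smul_eq_mul]
    rw [← Complex.exp_add]
    congr 1
    push_cast
    ring
  · simp [psi, hx]

lemma psi_mul (c c' m m' : ℂ) (r r' x : ℝ) :
    psi c m r x * psi c' m' r' x = psi (c + c') (m + m') (r + r') x := by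
  by_cases hx : 0 < x
  · simp only [psi, if_pos hx]
    rw [← Complex.exp_add]
    congr 1
    push_cast
    ring
  · simp [psi, hx]

lemma parseval_psi (c c' m m' : ℂ) (r r' : ℝ) (hc : 0 < c.re) (hc' : 0 < c'.re)
    (hm : 0 < m.re) (hm' : 0 < m'.re) :
    ∫ w, 𝓕⁻ (psi c m r) w * 𝓕 (psi c' m' r') w
      = ∫ x, psi (c + c') (m + m') (r + r') x := by
  have hF := integrable_fourier_psi c m r hc hm
  have hFi : Integrable (𝓕⁻ (psi c m r)) := by
    have : 𝓕⁻ (psi c m r) = fun w => 𝓕 (psi c m r) (-w) :=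
      funext fun w => Real.fourierInv_eq_fourier_neg _ _
    rw [this]
    exact hF.comp_neg
  have h := VectorFourier.integral_fourierIntegral_smul_eq_flip (μ := volume) (ν := volume)
    (L := innerₗ ℝ) (f := 𝓕⁻ (psi c m r)) (g := psi c' m' r')
    Real.continuous_fourierChar (by fun_prop) hFi
    (integrable_psi c' m' r' hc' hm')
  have hinv := (differentiable_psi c m r hc hm).continuous.fourier_fourierInv_eq
    (integrable_psi c m r hc hm) hF
  rw [flip_innerₗ] at h
  change ∫ w, 𝓕 (𝓕⁻ (psi c m r)) w • psi c' m' r' w =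
    ∫ w, 𝓕⁻ (psi c m r) w • 𝓕 (psi c' m' r') w at h
  rw [hinv] at h
  simp only [smul_eq_mul, psi_mul] at h
  exact h.symm

lemma image_auxT : auxT '' Ioi 0 = Ioi 0 := by
  ext t
  constructor
  · rintro ⟨x, hx, rfl⟩
    exact auxT_pos hx
  · intro ht
    have ht : 0 < t := ht
    have : 0 < t⁻¹ := inv_pos.2 ht
    refine ⟨Real.log (1 + t⁻¹), Real.log_pos (by linarith), ?_⟩
    rw [auxT, Real.exp_log (by linarith)]
    simp

lemma injOn_auxT : InjOn auxT (Ioi 0) := by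
  intro x _ y _ h
  simpa [auxT] using h

lemma hypU_eq (a z : ℂ) (b : ℝ) :
    hypU a b z = (Complex.Gamma a)⁻¹ * ∫ x, psi z a b x := by
  unfold hypU
  congr 1
  have h := integral_image_eq_integral_abs_deriv_smul (s := Ioi 0) measurableSet_Ioi
    (fun x hx => (hasDerivAt_auxT hx).hasDerivWithinAt) injOn_auxT
    (fun t : ℝ => Complex.exp (-z * t) * (t : ℂ) ^ (a - 1) * ((1 : ℂ) + t) ^ (b - a - 1))
  rw [image_auxT] at h
  rw [h]
  have e : ∀ x, psi z a b x = (Ioi (0:ℝ)).indicator (psi z a b) x := by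
    intro x
    by_cases hx : 0 < x
    · rw [indicator_of_mem (mem_Ioi.2 hx)]
    · rw [indicator_of_notMem (by simpa using hx), psi, if_neg hx]
  rw [integral_congr_ae (Eventually.of_forall e), integral_indicator measurableSet_Ioi]
  refine setIntegral_congr_fun measurableSet_Ioi fun x hx => ?_
  have hx : 0 < x := hx
  have hT := auxT_pos hx
  have hT1 : 0 < 1 + auxT x := by linarith
  have e1 : (auxT x : ℂ) ^ (a - 1) = Complex.exp ((-x - auxL x : ℝ) * (a - 1)) := by
    rw [Complex.cpow_def_of_ne_zero (by exact_mod_cast hT.ne'), ← Complex.ofReal_log hT.le,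
      log_auxT hx]
  have e2 : ((1 : ℂ) + auxT x) ^ (b - a - 1) = Complex.exp ((-auxL x : ℝ) * (b - a - 1)) := by
    have : ((1 : ℂ) + auxT x) = ((1 + auxT x : ℝ) : ℂ) := by push_cast; rfl
    rw [this, Complex.cpow_def_of_ne_zero (by exact_mod_cast hT1.ne'), ← Complex.ofReal_log hT1.le,
      log_one_add_auxT hx]
  have e3 : Real.exp (-x) * (1 + auxT x) ^ 2 = Real.exp (-x - 2 * auxL x) := by
    have : (1 + auxT x) = Real.exp (-auxL x) := by
      rw [← log_one_add_auxT hx, Real.exp_log hT1]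
    rw [this, sq, ← Real.exp_add, ← Real.exp_add]; congr 1; ring
  simp only [abs_neg]
  rw [abs_of_pos (by positivity), e1, e2, e3, psi, if_pos hx, Complex.real_smul,
    Complex.ofReal_exp, ← Complex.exp_add, ← Complex.exp_add, ← Complex.exp_add]
  congr 1
  push_cast
  ring

/-- Addition theorem for the order-one modified Bessel function of the second kind. -/
theorem besselK1_addition (ξ η σ : ℂ) (hξ : 0 < (ξ ^ 2).re) (hη : 0 < (η ^ 2).re)
    (hσ : |σ.re| < 3 / 4) :
    ξ * η * besselK1 ((ξ ^ 2 + η ^ 2) / 4) =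
      ((2 : ℂ) ^ ((1 : ℂ) / 2) * (ξ ^ 2 + η ^ 2) / ((Real.pi : ℂ) * Complex.I)) *
        (Complex.I * ∫ τ : ℝ,
          Complex.Gamma (3 / 4 - (σ + Complex.I * τ)) *
          Complex.Gamma (3 / 4 + (σ + Complex.I * τ)) *
          parD (2 * (σ + Complex.I * τ) - 1 / 2) ξ *
          parD (-2 * (σ + Complex.I * τ) - 1 / 2) η) := by
  have hσ' := abs_lt.1 hσ
  have hm : 0 < (3 / 4 - σ).re := by
    have : (3 / 4 - σ).re = 3 / 4 - σ.re := by simp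
    linarith
  have hm' : 0 < (3 / 4 + σ).re := by
    have : (3 / 4 + σ).re = 3 / 4 + σ.re := by simp
    linarith
  have hc : 0 < (ξ ^ 2 / 2).re := by
    have : (ξ ^ 2 / 2).re = (ξ ^ 2).re / 2 := by simp
    linarith
  have hc' : 0 < (η ^ 2 / 2).re := by
    have : (η ^ 2 / 2).re = (η ^ 2).re / 2 := by simp
    linarith
  have hP := parseval_psi (ξ ^ 2 / 2) (η ^ 2 / 2) (3 / 4 - σ) (3 / 4 + σ) (3 / 2) (3 / 2)
    hc hc' hm hm'
  set J := ∫ x, psi (ξ ^ 2 / 2 + η ^ 2 / 2) (3 / 4 - σ + (3 / 4 + σ)) (3 / 2 + 3 / 2) x with hJ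
  set G : ℝ → ℂ := fun w => 𝓕⁻ (psi (ξ ^ 2 / 2) (3 / 4 - σ) (3 / 2)) w *
    𝓕 (psi (η ^ 2 / 2) (3 / 4 + σ) (3 / 2)) w with hG
  have hpi : (Real.pi : ℂ) ≠ 0 := by exact_mod_cast Real.pi_ne_zero
  -- the left-hand side
  have hL : besselK1 ((ξ ^ 2 + η ^ 2) / 4) =
      Complex.exp (-((ξ ^ 2 + η ^ 2) / 4)) * (ξ ^ 2 + η ^ 2) * J := by
    have h3 : hypU (3 / 2) 3 (2 * ((ξ ^ 2 + η ^ 2) / 4)) = (Complex.Gamma (3 / 2))⁻¹ * J := by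
      have := hypU_eq (3 / 2) (2 * ((ξ ^ 2 + η ^ 2) / 4)) 3
      push_cast at this
      rw [this, hJ]
      congr 4 <;> first | ring | norm_num
    have hg : Complex.Gamma (3 / 2) = (Real.sqrt Real.pi : ℂ) / 2 := by
      have h := Complex.Gamma_add_one (1 / 2) (by norm_num)
      have e : (1 / 2 + 1 : ℂ) = 3 / 2 := by norm_num
      have e2 : Complex.Gamma (1 / 2) = (Real.sqrt Real.pi : ℂ) := by
        rw [← Real.Gamma_one_half_eq, ← Complex.Gamma_ofReal]; norm_num
      rw [e, e2] at h
      rw [h]; ring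
    have hs : (Real.sqrt Real.pi : ℂ) ≠ 0 := by
      exact_mod_cast (Real.sqrt_pos.2 Real.pi_pos).ne'
    rw [besselK1, h3, hg]
    field_simp
    ring
  -- the integrand
  have hI : ∀ τ : ℝ, Complex.Gamma (3 / 4 - (σ + Complex.I * τ)) *
          Complex.Gamma (3 / 4 + (σ + Complex.I * τ)) *
          parD (2 * (σ + Complex.I * τ) - 1 / 2) ξ *
          parD (-2 * (σ + Complex.I * τ) - 1 / 2) η =
      ((2 : ℂ) ^ (-(3 : ℂ) / 2) * Complex.exp (-((ξ ^ 2 + η ^ 2) / 4)) * (ξ * η)) *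
        G (τ * (2 * Real.pi)⁻¹) := by
    intro τ
    set s := σ + Complex.I * τ with hs
    have hsre : s.re = σ.re := by simp [hs]
    have g1 : Complex.Gamma (3 / 4 - s) ≠ 0 := Complex.Gamma_ne_zero_of_re_pos (by
      have : (3 / 4 - s).re = 3 / 4 - s.re := by simp
      linarith)
    have g2 : Complex.Gamma (3 / 4 + s) ≠ 0 := Complex.Gamma_ne_zero_of_re_pos (by
      have : (3 / 4 + s).re = 3 / 4 + s.re := by simp
      linarith)
    have u1 := hypU_eq (3 / 4 - s) (ξ ^ 2 / 2) (3 / 2)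
    have u2 := hypU_eq (3 / 4 + s) (η ^ 2 / 2) (3 / 2)
    push_cast at u1 u2
    have a1 : (1 - (2 * s - 1 / 2)) / 2 = 3 / 4 - s := by ring
    have a2 : (1 - (-2 * s - 1 / 2)) / 2 = 3 / 4 + s := by ring
    have p2 : (2 : ℂ) ^ (-(3 : ℂ) / 2) =
        (2 : ℂ) ^ ((2 * s - 1 / 2 - 1) / 2) * (2 : ℂ) ^ ((-2 * s - 1 / 2 - 1) / 2) := by
      rw [← Complex.cpow_add _ _ (by norm_num)]
      congr 1; ring
    have pe : Complex.exp (-((ξ ^ 2 + η ^ 2) / 4)) =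
        Complex.exp (-ξ ^ 2 / 4) * Complex.exp (-η ^ 2 / 4) := by
      rw [← Complex.exp_add]; congr 1; ring
    have f1 : 𝓕⁻ (psi (ξ ^ 2 / 2) (3 / 4 - σ) (3 / 2)) (τ * (2 * Real.pi)⁻¹) =
        ∫ x, psi (ξ ^ 2 / 2) (3 / 4 - s) (3 / 2) x := by
      rw [Real.fourierInv_eq_fourier_neg, fourier_psi]
      congr 3
      rw [hs]; push_cast; field_simp; ring
    have f2 : 𝓕 (psi (η ^ 2 / 2) (3 / 4 + σ) (3 / 2)) (τ * (2 * Real.pi)⁻¹) =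
        ∫ x, psi (η ^ 2 / 2) (3 / 4 + s) (3 / 2) x := by
      rw [fourier_psi]
      congr 3
      rw [hs]; push_cast; field_simp; ring
    simp only [hG]
    rw [f1, f2, parD, parD, a1, a2, u1, u2, p2, pe]
    generalize Complex.Gamma (3 / 4 - s) = y1 at g1 ⊢
    generalize Complex.Gamma (3 / 4 + s) = y2 at g2 ⊢
    generalize (∫ x, psi (ξ ^ 2 / 2) (3 / 4 - s) (3 / 2) x) = y3
    generalize (∫ x, psi (η ^ 2 / 2) (3 / 4 + s) (3 / 2) x) = y4
    field_simp
  rw [integral_congr_ae (Eventually.of_forall hI), integral_const_mul,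
    Measure.integral_comp_mul_right G, hP, hL, inv_inv, abs_of_pos (by positivity),
    Complex.real_smul]
  have p3 : (2 : ℂ) ^ ((1 : ℂ) / 2) * (2 : ℂ) ^ (-(3 : ℂ) / 2) = 1 / 2 := by
    rw [← Complex.cpow_add _ _ (by norm_num)]
    have : (1 : ℂ) / 2 + -3 / 2 = -1 := by norm_num
    rw [this, Complex.cpow_neg_one]; norm_num
  have hI0 := Complex.I_ne_zero
  push_cast
  generalize (2 : ℂ) ^ ((1 : ℂ) / 2) = q1 at p3 ⊢
  generalize (2 : ℂ) ^ (-(3 : ℂ) / 2) = q2 at p3 ⊢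
  generalize Complex.exp (-((ξ ^ 2 + η ^ 2) / 4)) = q3
  field_simp
  linear_combination (-2 * ξ * η * (ξ ^ 2 + η ^ 2) * J * q3) * p3
end
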